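/- Let I be a nonempty finite index set, let 𝒜 = (A_i)_{i∈I} be a uniformly hyperbolic family in SL₂(ℝ) with attractor K, let p be a nondegenerate probability vector, let ν be the stationary measure of (𝒜,p), and write τ(q) = τ(ν,q). Fix q > 1, let α⁺ ∈ ℝ be the right derivative of τ at q, i.e. (τ(q+h) − τ(q))/h → α⁺ as h → 0⁺, and set τ*(α⁺) = α⁺·q − τ(q). For every κ ∈ (0,1) there exist η > 0 and M ∈ ℕ such that for every m ≥ M, every s ∈ ℕ, every I ∈ 𝒟_s and every subset 𝒟' ⊆ 𝒟_{s+m}(I) whose cardinality is at most 2^((τ*(α⁺)-κ)m), one has Σ_{J∈𝒟'} ν(J)^q ≤ 2^(-(τ(q)+η)m) · ν(2I)^q. -/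

import Mathlib

/-!
Write `τ' = τ(q + h)` for a small `h > 0` with `(τ' - τ(q)) / h` close to `α⁺`. Hölder's inequality
(`sum_rpow_le_card`) bounds a sum of `ν(J)^q` over few arcs `J` by a power of the number of arcs
times a power of the sum of `ν(J)^(q+h)` over all arcs of length `2^(-(s+m))` inside `I`. The
latter sum is controlled by the local `L^q` bound

  `∑ ν(J)^(q+h) ≤ C ν(2I)^(q+h) ∑_{L ∈ 𝒟_m} ν(L)^(q+h)`   (`local_bound`),

and the last factor is at most `2^(-(τ'-ε)m)` for large `m`. As `card 𝒟' ≤ 2^((τ* - κ) m)`, the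
`κ` gains a factor exponentially small in `m`: this is `exponent_le`.

The local bound comes from stationarity: `ν = ∑ a_j (A_j)_* ν` with products `A_j` of norm
comparable to `2^(s/2)` (`stationary_family`). Were all `A_j` contractions by `2^(-s)` up to a
constant on a set of full measure, those `A_j` whose image meets `I` would map this set into
`2I`, so that their weights would add up to at most `ν(2I)`, and convexity of `t ↦ t^q` would
give the bound, the preimages under `A_j` of the arcs `J` being essentially arcs of length `2^(-m)`
(`image_sum_le`). The contraction is quantified by `sn_pact`:
`sin ∠(Ax, Ay) = sin ∠(x, y) / (|A|_x |A|_y)`, where `|A|_x` is the factor by which `A` stretches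
the line `x`. What is needed is therefore a lower bound `‖A_w x‖ ≥ c₀ ‖A_w‖ ‖x‖` for `ν`-almost
every `x` and every word `w`.

This is where uniform hyperbolicity enters. Along an orbit segment from `y`, in the moving frame
formed by a vector and its rotation by a right angle, a product is triangular, whence `‖A_w‖` is
controlled by the lengths of the vectors of that single orbit (`op_wordProd_le`). If an orbit never
got shorter than its start and later came back to the same length, then `‖A_w‖` would grow at most
linearly along it, contradicting uniform hyperbolicity once the segment is long. So a vector that
has been expanded by a definite factor in its past can never be contracted back, and has the
required lower bound (`domination`). Finally, if `ν` has no atoms, almost every point has been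
expanded in its past (`measure_expanded`). Absence of atoms is used in the form that the masses of
dyadic arcs tend to `0` uniformly with their length.

If `ν` does have atoms, `τ` vanishes identically on `[1, ∞)`, hence `α⁺ = 0`, and the cardinality
hypothesis forces `𝒟'` to be empty for `m ≥ 1`.
-/

open MeasureTheory Filter Set Topology

namespace Paper

noncomputable section

abbrev Mat2 : Type := Matrix (Fin 2) (Fin 2) ℝ
abbrev SL2 : Type := Matrix.SpecialLinearGroup (Fin 2) ℝ

/-- The operator norm on 2×2 real matrices induced by the Euclidean norm on ℝ². -/
def opNorm (M : Mat2) : ℝ := ‖(Matrix.toEuclideanLin M).toContinuousLinearMap‖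

/-- The product `A_{i₁} ⋯ A_{i_n}` of the matrices along a word `w = (i₁, …, i_n)`. -/
def wordProd {ι : Type*} (A : ι → SL2) (w : List ι) : SL2 := (w.map A).prod

/-- The product `p_{i₁} ⋯ p_{i_n}` of the weights along a word `w = (i₁, …, i_n)`. -/
def wordWeight {ι : Type*} (p : ι → ℝ) (w : List ι) : ℝ := (w.map p).prod

/-- A finite family in SL₂(ℝ) is uniformly hyperbolic if `‖A_i‖ ≥ c rⁿ` for all words of
length `n ≥ 1`. -/
def UniformlyHyperbolic {ι : Type*} (A : ι → SL2) : Prop :=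
  ∃ c > (0:ℝ), ∃ r > (1:ℝ), ∀ w : List ι, w ≠ [] →
    c * r ^ w.length ≤ opNorm (wordProd A w : Mat2)

/-- Strongly Diophantine: distinct words of the same length give matrices that are
exponentially separated. -/
def StronglyDiophantine {ι : Type*} (A : ι → SL2) : Prop :=
  ∃ c ∈ Set.Ioo (0:ℝ) 1, ∀ w w' : List ι, w ≠ [] → w.length = w'.length → w ≠ w' →
    c ^ w.length ≤ opNorm ((wordProd A w : Mat2) - (wordProd A w' : Mat2))

/-- The real projective line. -/
abbrev RP1 : Type := Projectivization ℝ (Fin 2 → ℝ)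

lemma cos_sin_ne_zero (θ : ℝ) : ![Real.cos θ, Real.sin θ] ≠ 0 := by
  intro h
  have h0 : Real.cos θ = 0 := by simpa using congrFun h 0
  have h1 : Real.sin θ = 0 := by simpa using congrFun h 1
  have h2 := Real.sin_sq_add_cos_sq θ
  rw [h0, h1] at h2
  norm_num at h2

/-- The point of ℝP¹ in the direction of angle `θ`. -/
def dir (θ : ℝ) : RP1 := Projectivization.mk ℝ ![Real.cos θ, Real.sin θ] (cos_sin_ne_zero θ)

/-- The quotient topology on ℝP¹ (expressed through the angle parametrization). -/
instance : TopologicalSpace RP1 := TopologicalSpace.coinduced dir inferInstance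

/-- The Borel σ-algebra on ℝP¹. -/
instance : MeasurableSpace RP1 := borel RP1

/-- The natural action of `A ∈ SL₂(ℝ)` on ℝP¹, `A·[v] = [Av]`. -/
def pact (A : SL2) : RP1 → RP1 :=
  Projectivization.map (Matrix.SpecialLinearGroup.toLin' A).toLinearMap
    (Matrix.SpecialLinearGroup.toLin' A).injective

/-- `K` is the attractor of the family `A`: the (unique) nonempty compact set with
`K = ⋃ᵢ Aᵢ·K`. -/
def IsAttractor {ι : Type*} [Fintype ι] (A : ι → SL2) (K : Set RP1) : Prop :=
  K.Nonempty ∧ IsCompact K ∧ K = ⋃ i : ι, pact (A i) '' K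

/-- `ν` is stationary for the family `A` with weights `p`: `ν = Σ_i p_i (A_i)_* ν`. -/
def IsStationary {ι : Type*} [Fintype ι] (A : ι → SL2) (p : ι → ℝ) (ν : Measure RP1) : Prop :=
  ν = ∑ i : ι, ENNReal.ofReal (p i) • Measure.map (pact (A i)) ν

/-- The `k`-th arc of the `2^{-m}` dyadic partition of ℝP¹. -/
def dyadic (m k : ℕ) : Set RP1 :=
  dir '' Set.Ico (Real.pi * k / 2 ^ m) (Real.pi * (k + 1) / 2 ^ m)

/-- The concentric doubled arc `2I` of the `k`-th arc of the `2^{-m}` dyadic partition. -/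
def dyadic2 (m k : ℕ) : Set RP1 :=
  dir '' Set.Ico (Real.pi * ((k : ℝ) - 1 / 2) / 2 ^ m) (Real.pi * ((k : ℝ) + 3 / 2) / 2 ^ m)

/-- `Σ_{I ∈ 𝒟_m} ν(I)^q`. -/
def lqSum (ν : Measure RP1) (q : ℝ) (m : ℕ) : ℝ :=
  ∑ k ∈ Finset.range (2 ^ m), ((ν (dyadic m k)).toReal) ^ q

/-- The L^q spectrum `τ(ν,q) = liminf_m −(1/m) log₂ Σ_{I∈𝒟_m} ν(I)^q`. -/
def lqSpectrum (ν : Measure RP1) (q : ℝ) : ℝ :=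
  Filter.liminf (fun m : ℕ => -(1 / (m : ℝ)) * Real.logb 2 (lqSum ν q m)) Filter.atTop

/-- `(1/n) log₂ Σ_{i ∈ Iⁿ} p_i^q ‖A_i‖^{2s}`, the `n`-th approximant of the pressure
`Ψ_q(s)`. -/
def psiAvg {ι : Type*} [Fintype ι] (A : ι → SL2) (p : ι → ℝ) (q s : ℝ) (n : ℕ) : ℝ :=
  (1 / (n : ℝ)) * Real.logb 2
    (∑ w : Fin n → ι,
      (wordWeight p (List.ofFn w)) ^ q * (opNorm (wordProd A (List.ofFn w) : Mat2)) ^ (2 * s))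

/-- `t = τ̃(q)`: `t` is the unique positive zero of the pressure function `Ψ_q`. -/
def IsPressureZero {ι : Type*} [Fintype ι] (A : ι → SL2) (p : ι → ℝ) (q t : ℝ) : Prop :=
  0 < t ∧
  Filter.Tendsto (fun n => psiAvg A p q t n) Filter.atTop (nhds 0) ∧
  ∀ s : ℝ, 0 < s → Filter.Tendsto (fun n => psiAvg A p q s n) Filter.atTop (nhds 0) → s = t

/-- The angle metric on ℝP¹: `d([v],[w]) = arccos(|⟨v,w⟩| / (‖v‖ ‖w‖))`. -/
def pdist (x y : RP1) : ℝ :=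
  Real.arccos (|x.rep 0 * y.rep 0 + x.rep 1 * y.rep 1| /
    (Real.sqrt (x.rep 0 ^ 2 + x.rep 1 ^ 2) * Real.sqrt (y.rep 0 ^ 2 + y.rep 1 ^ 2)))

/-- The open ball in ℝP¹ of radius `r` and center `x`. -/
def pball (x : RP1) (r : ℝ) : Set RP1 := {y | pdist x y < r}

instance : Fact (0 < Real.pi) := ⟨Real.pi_pos⟩

/-- The angle coordinate `Θ : ℝP¹ → ℝ/πℤ`. -/
def theta (x : RP1) : AddCircle Real.pi :=
  ((Complex.arg ((x.rep 0 : ℂ) + (x.rep 1 : ℂ) * Complex.I) : ℝ) : AddCircle Real.pi)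

/-- `w` is a `2^m` stopping word for the family `A`. -/
def IsStopping {ι : Type*} (A : ι → SL2) (m : ℕ) (w : List ι) : Prop :=
  w ≠ [] ∧
  (∀ j : ℕ, 1 ≤ j → j < w.length → opNorm (wordProd A (w.take j) : Mat2) ^ 2 < (2:ℝ) ^ m) ∧
  (2 : ℝ) ^ m ≤ opNorm (wordProd A w : Mat2) ^ 2

/-- `Σ_{i ∈ Ω_m} p_i^q`, the `L^q` sum over the `2^m` stopping words. -/
def stopSum {ι : Type*} [Fintype ι] (A : ι → SL2) (p : ι → ℝ) (q : ℝ) (m : ℕ) : ℝ :=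
  ∑' w : List ι,
    Set.indicator {w : List ι | IsStopping A m w} (fun w => (wordWeight p w) ^ q) w

/-- `Σ_{J ∈ 𝒟_{s+m}(I)} ν(J)^q` for `I` the `k`-th arc of `𝒟_s`. -/
def localSum (ν : Measure RP1) (q : ℝ) (s m k : ℕ) : ℝ :=
  ∑ j ∈ Finset.range (2 ^ (s + m)),
    Set.indicator {j : ℕ | (dyadic (s + m) j ∩ dyadic s k).Nonempty}
      (fun j => (ν (dyadic (s + m) j)).toReal ^ q) j


/-! ### Linear algebra of `SL₂(ℝ)` acting on the plane -/

/-- The Euclidean norm on `Fin 2 → ℝ` (whose default norm is the sup norm). -/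
def nrm (v : Fin 2 → ℝ) : ℝ := ‖WithLp.toLp 2 v‖

/-- The area form on `ℝ²`. -/
def area (u v : Fin 2 → ℝ) : ℝ := u 0 * v 1 - u 1 * v 0

/-- The linear action of `A ∈ SL₂(ℝ)` on `ℝ²`. -/
def act (A : SL2) (v : Fin 2 → ℝ) : Fin 2 → ℝ := (A : Mat2).mulVec v

/-- The rotation by a right angle. -/
def rot (v : Fin 2 → ℝ) : Fin 2 → ℝ := ![-v 1, v 0]

/-- The operator norm of `A ∈ SL₂(ℝ)`. -/
def op (A : SL2) : ℝ := opNorm (A : Mat2)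

lemma nrm_nonneg (v : Fin 2 → ℝ) : 0 ≤ nrm v := norm_nonneg _

lemma nrm_sq (v : Fin 2 → ℝ) : nrm v ^ 2 = v 0 ^ 2 + v 1 ^ 2 := by
  simp [nrm, EuclideanSpace.norm_sq_eq, Fin.sum_univ_two]

lemma nrm_eq (v : Fin 2 → ℝ) : nrm v = √(v 0 ^ 2 + v 1 ^ 2) := by
  rw [← nrm_sq, Real.sqrt_sq (nrm_nonneg v)]

lemma nrm_smul (c : ℝ) (v : Fin 2 → ℝ) : nrm (c • v) = |c| * nrm v := by
  simp [nrm, norm_smul]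

lemma nrm_add_le (u v : Fin 2 → ℝ) : nrm (u + v) ≤ nrm u + nrm v := by
  simpa [nrm] using norm_add_le (WithLp.toLp 2 u) (WithLp.toLp 2 v)

lemma nrm_pos {v : Fin 2 → ℝ} (hv : v ≠ 0) : 0 < nrm v := by
  rw [nrm, norm_pos_iff]
  simpa using hv

lemma ne_zero_of_nrm_pos {v : Fin 2 → ℝ} (hv : 0 < nrm v) : v ≠ 0 := by
  rintro rfl
  simp [nrm] at hv

lemma nrm_rot (v : Fin 2 → ℝ) : nrm (rot v) = nrm v := by
  rw [nrm_eq, nrm_eq]; simp [rot]; ring_nf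

lemma abs_area_le (u v : Fin 2 → ℝ) : |area u v| ≤ nrm u * nrm v := by
  apply abs_le_of_sq_le_sq _ (mul_nonneg (nrm_nonneg _) (nrm_nonneg _))
  rw [mul_pow, nrm_sq, nrm_sq, area]
  nlinarith [sq_nonneg (u 0 * v 0 + u 1 * v 1)]

lemma area_rot (u : Fin 2 → ℝ) : area u (rot u) = nrm u ^ 2 := by
  rw [nrm_sq]; simp [area, rot]; ring

lemma act_apply_zero (A : SL2) (v : Fin 2 → ℝ) :
    act A v 0 = A.1 0 0 * v 0 + A.1 0 1 * v 1 := by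
  simp [act, Matrix.mulVec, dotProduct, Fin.sum_univ_two]

lemma act_apply_one (A : SL2) (v : Fin 2 → ℝ) :
    act A v 1 = A.1 1 0 * v 0 + A.1 1 1 * v 1 := by
  simp [act, Matrix.mulVec, dotProduct, Fin.sum_univ_two]

lemma act_mul (A B : SL2) (v : Fin 2 → ℝ) : act (A * B) v = act A (act B v) := by
  rw [act, act, act, Matrix.mulVec_mulVec, Matrix.SpecialLinearGroup.coe_mul]

lemma act_one (v : Fin 2 → ℝ) : act 1 v = v := by simp [act]

lemma act_smul (A : SL2) (c : ℝ) (v : Fin 2 → ℝ) : act A (c • v) = c • act A v := by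
  simp [act, Matrix.mulVec_smul]

lemma act_add (A : SL2) (u v : Fin 2 → ℝ) : act A (u + v) = act A u + act A v := by
  simp [act, Matrix.mulVec_add]

lemma area_act (A : SL2) (u v : Fin 2 → ℝ) : area (act A u) (act A v) = area u v := by
  have h := A.2
  rw [Matrix.det_fin_two] at h
  simp only [area, act_apply_zero, act_apply_one]
  linear_combination (u 0 * v 1 - u 1 * v 0) * h

lemma act_inv_act (A : SL2) (v : Fin 2 → ℝ) : act A⁻¹ (act A v) = v := by
  rw [← act_mul, inv_mul_cancel, act_one]

lemma act_act_inv (A : SL2) (v : Fin 2 → ℝ) : act A (act A⁻¹ v) = v := by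
  rw [← act_mul, mul_inv_cancel, act_one]

lemma act_ne_zero (A : SL2) {v : Fin 2 → ℝ} (hv : v ≠ 0) : act A v ≠ 0 := by
  intro h
  apply hv
  rw [← act_inv_act A v, h]
  simp [act]

lemma op_nonneg (A : SL2) : 0 ≤ op A := norm_nonneg _

lemma nrm_act_le (A : SL2) (v : Fin 2 → ℝ) : nrm (act A v) ≤ op A * nrm v := by
  have := (Matrix.toEuclideanLin (A : Mat2)).toContinuousLinearMap.le_opNorm (WithLp.toLp 2 v)
  simpa [nrm, act, op, opNorm] using this

lemma op_le {A : SL2} {c : ℝ} (hc : 0 ≤ c) (h : ∀ v, nrm (act A v) ≤ c * nrm v) : op A ≤ c := by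
  apply ContinuousLinearMap.opNorm_le_bound _ hc
  intro v
  change ‖Matrix.toEuclideanLin (A : Mat2) v‖ ≤ c * ‖v‖
  exact h v.ofLp

lemma op_mul_le (A B : SL2) : op (A * B) ≤ op A * op B := by
  apply op_le (mul_nonneg (op_nonneg _) (op_nonneg _))
  intro v
  rw [act_mul, mul_assoc]
  exact (nrm_act_le _ _).trans (mul_le_mul_of_nonneg_left (nrm_act_le _ _) (op_nonneg _))

/-- In `SL₂` one has `‖A⁻¹‖ = ‖A‖`, so `A` contracts no vector by more than `‖A‖`. -/
lemma nrm_le_act (A : SL2) (v : Fin 2 → ℝ) : nrm v ≤ op A * nrm (act A v) := by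
  rcases eq_or_ne v 0 with rfl | hv
  · simp only [nrm]; simp; exact mul_nonneg (op_nonneg _) (norm_nonneg _)
  have hp := nrm_pos hv
  -- `area v (rot v) = ‖v‖²` is preserved by `A`.
  have h1 : nrm v ^ 2 ≤ nrm (act A v) * (op A * nrm v) := by
    rw [← area_rot, ← area_act A]
    refine (le_abs_self _).trans ((abs_area_le _ _).trans ?_)
    refine mul_le_mul_of_nonneg_left ?_ (nrm_nonneg _)
    simpa [nrm_rot] using nrm_act_le A (rot v)
  nlinarith

lemma one_le_op (A : SL2) : 1 ≤ op A := by
  have hv : (![1, 0] : Fin 2 → ℝ) ≠ 0 := fun h => by simpa using congrFun h 0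
  have h1 := nrm_le_act A ![1, 0]
  have h2 := nrm_act_le A ![1, 0]
  have h3 : nrm ![1, 0] = 1 := by simp [nrm_eq]
  rw [h3] at h1 h2
  have := op_nonneg A
  nlinarith

/-- The images of two vectors spanning a definite area control the operator norm. -/
lemma op_mul_area_le (A : SL2) (y z : Fin 2 → ℝ) :
    op A * |area y z| ≤ nrm z * nrm (act A y) + nrm y * nrm (act A z) := by
  have hR : 0 ≤ nrm z * nrm (act A y) + nrm y * nrm (act A z) := by
    have := nrm_nonneg z; have := nrm_nonneg y
    have := nrm_nonneg (act A z); have := nrm_nonneg (act A y)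
    positivity
  rcases eq_or_ne (area y z) 0 with h0 | h0
  · simpa [h0] using hR
  have hpos : 0 < |area y z| := abs_pos.2 h0
  rw [← le_div_iff₀ hpos]
  apply op_le (div_nonneg hR hpos.le)
  intro v
  have key : area y z • act A v = area v z • act A y + area y v • act A z := by
    ext i
    fin_cases i <;> simp [act_apply_zero, act_apply_one, area] <;> ring
  have h1 : |area y z| * nrm (act A v)
      ≤ nrm v * nrm z * nrm (act A y) + nrm y * nrm v * nrm (act A z) := by
    rw [← nrm_smul, key]
    refine (nrm_add_le _ _).trans ?_
    rw [nrm_smul, nrm_smul]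
    gcongr
    · exact nrm_nonneg _
    · exact abs_area_le _ _
    · exact nrm_nonneg _
    · exact abs_area_le _ _
  rw [div_mul_eq_mul_div, le_div_iff₀ hpos]
  linarith

/-- One step of the triangular form of a product along the moving frame `(y, rot y)`. -/
lemma frame_step (A : SL2) {z : Fin 2 → ℝ} (hz : z ≠ 0) :
    ∃ b : ℝ, act A (rot z) = (nrm z ^ 2 / nrm (act A z) ^ 2) • rot (act A z) + b • act A z ∧
      |b| ≤ op A ^ 2 * nrm z ^ 2 / nrm (act A z) ^ 2 := by
  have hn := nrm_pos (act_ne_zero A hz)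
  have hne : nrm (act A z) ^ 2 ≠ 0 := by positivity
  set t := act A (rot z) with ht
  set y := act A z with hy
  have har : area y t = nrm z ^ 2 := by rw [ht, hy, area_act, area_rot]
  refine ⟨(t 0 * y 0 + t 1 * y 1) / nrm y ^ 2, ?_, ?_⟩
  · rw [← har]
    ext i
    have e := nrm_sq y
    fin_cases i
    · simp [rot, area]; field_simp; rw [e]; ring
    · simp [rot, area]; field_simp; rw [e]; ring
  · rw [abs_div, abs_of_pos (show 0 < nrm y ^ 2 by positivity)]
    gcongr
    have h1 : |t 0 * y 0 + t 1 * y 1| ≤ nrm t * nrm y := by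
      apply abs_le_of_sq_le_sq _ (mul_nonneg (nrm_nonneg _) (nrm_nonneg _))
      rw [mul_pow, nrm_sq, nrm_sq]
      nlinarith [sq_nonneg (t 0 * y 1 - t 1 * y 0)]
    refine h1.trans ?_
    have h2 : nrm t ≤ op A * nrm z := by
      simpa [nrm_rot] using nrm_act_le A (rot z)
    have h3 : nrm y ≤ op A * nrm z := nrm_act_le A z
    calc nrm t * nrm y ≤ (op A * nrm z) * (op A * nrm z) :=
          mul_le_mul h2 h3 (nrm_nonneg _) (mul_nonneg (op_nonneg _) (nrm_nonneg _))
      _ = _ := by ring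

lemma wordProd_nil {ι : Type*} (A : ι → SL2) : wordProd A [] = 1 := by simp [wordProd]

lemma wordProd_cons {ι : Type*} (A : ι → SL2) (i : ι) (w : List ι) :
    wordProd A (i :: w) = A i * wordProd A w := by simp [wordProd]

lemma wordProd_append {ι : Type*} (A : ι → SL2) (v w : List ι) :
    wordProd A (v ++ w) = wordProd A v * wordProd A w := by simp [wordProd]

/-- The sum of `‖A_u y‖⁻²` over the nonempty suffixes `u` of the word. -/
def profileSum {ι : Type*} (A : ι → SL2) (y : Fin 2 → ℝ) : List ι → ℝ
  | [] => 0
  | i :: w => profileSum A y w + 1 / nrm (act (wordProd A (i :: w)) y) ^ 2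

lemma profileSum_nonneg {ι : Type*} (A : ι → SL2) (y : Fin 2 → ℝ) (w : List ι) :
    0 ≤ profileSum A y w := by
  induction w with
  | nil => simp [profileSum]
  | cons i w ih => simp only [profileSum]; positivity

/-- The triangular form of a product of matrices along the orbit of `y`, in the
moving frames formed by a vector and its rotation. -/
lemma frame_word {ι : Type*} (A : ι → SL2) {C : ℝ} (hC : ∀ i, op (A i) ≤ C)
    {y : Fin 2 → ℝ} (hy : y ≠ 0) (w : List ι) :
    ∃ b : ℝ, act (wordProd A w) (rot y) =
        (nrm y ^ 2 / nrm (act (wordProd A w) y) ^ 2) • rot (act (wordProd A w) y)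
          + b • act (wordProd A w) y ∧
      |b| ≤ C ^ 2 * nrm y ^ 2 * profileSum A y w := by
  induction w with
  | nil =>
    have := (nrm_pos hy).ne'
    refine ⟨0, ?_, ?_⟩
    · simp [wordProd_nil, act_one, this]
    · simp [profileSum]
  | cons i w ih =>
    obtain ⟨b, hb, hb'⟩ := ih
    have hz := act_ne_zero (wordProd A w) hy
    obtain ⟨b₁, h1, h1'⟩ := frame_step (A i) hz
    have hzp := nrm_pos hz
    set z := act (wordProd A w) y with hzdef
    have hAz : act (wordProd A (i :: w)) y = act (A i) z := by
      rw [wordProd_cons, act_mul]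
    have hyp := nrm_pos hy
    refine ⟨b + nrm y ^ 2 / nrm z ^ 2 * b₁, ?_, ?_⟩
    · rw [hAz, wordProd_cons, act_mul, hb, act_add, act_smul, act_smul, h1, smul_add, smul_smul,
        smul_smul, add_smul]
      have : nrm y ^ 2 / nrm z ^ 2 * (nrm z ^ 2 / nrm (act (A i) z) ^ 2)
          = nrm y ^ 2 / nrm (act (A i) z) ^ 2 := by
        field_simp
      rw [this]
      abel
    · refine (abs_add_le _ _).trans ?_
      simp only [profileSum]
      rw [hAz, mul_add]
      refine add_le_add hb' ?_
      rw [abs_mul, abs_of_pos (show 0 < nrm y ^ 2 / nrm z ^ 2 by positivity)]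
      calc nrm y ^ 2 / nrm z ^ 2 * |b₁|
          ≤ nrm y ^ 2 / nrm z ^ 2 * (op (A i) ^ 2 * nrm z ^ 2 / nrm (act (A i) z) ^ 2) := by
            gcongr
        _ = op (A i) ^ 2 * (nrm y ^ 2 * (1 / nrm (act (A i) z) ^ 2)) := by
            field_simp
        _ ≤ C ^ 2 * (nrm y ^ 2 * (1 / nrm (act (A i) z) ^ 2)) := by
            have := op_nonneg (A i)
            have := hC i
            gcongr
        _ = _ := by ring

/-- The norm of a product is controlled by the norms of the points of any one orbit. -/
lemma op_wordProd_le {ι : Type*} (A : ι → SL2) {C : ℝ} (hC : ∀ i, op (A i) ≤ C)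
    {y : Fin 2 → ℝ} (hy : y ≠ 0) (w : List ι) :
    op (wordProd A w) ≤ nrm (act (wordProd A w) y) / nrm y + nrm y / nrm (act (wordProd A w) y)
      + C ^ 2 * profileSum A y w * nrm y * nrm (act (wordProd A w) y) := by
  obtain ⟨b, hb, hb'⟩ := frame_word A hC hy w
  have hyp := nrm_pos hy
  have hzp := nrm_pos (act_ne_zero (wordProd A w) hy)
  have h1 := op_mul_area_le (wordProd A w) y (rot y)
  rw [area_rot, nrm_rot, abs_of_pos (by positivity), ← mul_add] at h1
  set z := act (wordProd A w) y with hzdef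
  have h2 : nrm (act (wordProd A w) (rot y)) ≤
      nrm y ^ 2 / nrm z + C ^ 2 * nrm y ^ 2 * profileSum A y w * nrm z := by
    rw [hb]
    refine (nrm_add_le _ _).trans ?_
    rw [nrm_smul, nrm_smul, nrm_rot, abs_of_pos (by positivity)]
    refine add_le_add (le_of_eq (by field_simp)) ?_
    gcongr
  have h3 : op (wordProd A w) * nrm y ≤ nrm z + nrm (act (wordProd A w) (rot y)) := by
    refine le_of_mul_le_mul_left ?_ hyp
    linarith
  have h4 : op (wordProd A w) * nrm y ≤ (nrm z / nrm y + nrm y / nrm z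
      + C ^ 2 * profileSum A y w * nrm y * nrm z) * nrm y := by
    refine h3.trans ((add_le_add_right h2 _).trans (le_of_eq ?_))
    field_simp
    ring
  exact le_of_mul_le_mul_right h4 hyp

/-! ### Uniform hyperbolicity and domination -/

/-- The bound on `profileSum` for an orbit segment bounded below. -/
lemma profileSum_le_length {ι : Type*} (A : ι → SL2) (y : Fin 2 → ℝ) {g : ℝ} (hg : 0 < g)
    (w : List ι) (h : ∀ u, u <:+ w → g ≤ nrm (act (wordProd A u) y)) :
    profileSum A y w ≤ w.length / g ^ 2 := by
  induction w with
  | nil => simp [profileSum]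
  | cons i w ih =>
    simp only [profileSum, List.length_cons, Nat.cast_add, Nat.cast_one, add_div]
    refine add_le_add (ih fun u hu => h u (hu.trans (List.suffix_cons i w))) ?_
    have := h (i :: w) (List.suffix_refl _)
    gcongr

/-- For an exponentially growing orbit `profileSum` is bounded independently of the length; the
last factor makes the induction close. -/
lemma profileSum_le_geom {ι : Type*} (A : ι → SL2) (y : Fin 2 → ℝ) {g t : ℝ} (hg : 0 < g)
    (ht : 1 < t) (w : List ι)
    (h : ∀ u, u <:+ w → g * t ^ u.length ≤ nrm (act (wordProd A u) y)) :
    profileSum A y w ≤ 1 / (g ^ 2 * (t ^ 2 - 1)) * (1 - (1 / t ^ 2) ^ w.length) := by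
  have ht2 : 0 < t ^ 2 - 1 := by nlinarith
  have ht0 : 0 < t := by linarith
  induction w with
  | nil => simp [profileSum]
  | cons i w ih =>
    have h1 := ih fun u hu => h u (hu.trans (List.suffix_cons i w))
    have h2 := h (i :: w) (List.suffix_refl _)
    have h3 : 1 / nrm (act (wordProd A (i :: w)) y) ^ 2 ≤ 1 / (g * t ^ (w.length + 1)) ^ 2 := by
      rw [List.length_cons] at h2
      gcongr
    simp only [profileSum, List.length_cons]
    refine (add_le_add h1 h3).trans (le_of_eq ?_)
    have h4 : (t ^ w.length) ≠ 0 := by positivity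
    simp only [one_div, inv_pow, ← pow_mul, mul_pow, pow_succ]
    field_simp
    ring

lemma exists_op_bound {ι : Type*} [Finite ι] (A : ι → SL2) :
    ∃ C : ℝ, 1 ≤ C ∧ ∀ i, op (A i) ≤ C := by
  obtain ⟨B, hB⟩ := (Set.finite_range fun i => op (A i)).bddAbove
  exact ⟨max B 1, le_max_right _ _, fun i => (hB ⟨i, rfl⟩).trans (le_max_left _ _)⟩

/-- Exponential growth absorbs a linear factor, at the price of a smaller rate. -/
lemma growth {ι : Type*} {A : ι → SL2} (hA : UniformlyHyperbolic A) {k : ℝ} (hk : 0 ≤ k) :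
    ∃ c > (0 : ℝ), ∃ t > (1 : ℝ), ∀ w : List ι,
      c * t ^ w.length * (2 + k * w.length) ≤ op (wordProd A w) := by
  obtain ⟨c, hc, r, hr, h⟩ := hA
  have ht : 1 < √r := by rw [Real.lt_sqrt] <;> linarith
  set t := √r with htdef
  have htr : r = t * t := (Real.mul_self_sqrt (by linarith)).symm
  have ht1 : 0 < t - 1 := by linarith
  set B := 2 + k / (t - 1) with hB
  have hBpos : 0 < B := by positivity
  have hlin : ∀ n : ℕ, 2 + k * n ≤ B * t ^ n := by
    intro n
    have h1 : 1 + (n : ℝ) * (t - 1) ≤ t ^ n := by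
      have := one_add_mul_le_pow (a := t - 1) (by linarith) n
      simpa using this
    have h2 : B * (1 + (n : ℝ) * (t - 1)) = 2 + k / (t - 1) + 2 * n * (t - 1) + k * n := by
      rw [hB]; field_simp; ring
    have h3 : 0 ≤ k / (t - 1) := by positivity
    have h4 : 0 ≤ 2 * n * (t - 1) := by positivity
    calc 2 + k * n ≤ B * (1 + (n : ℝ) * (t - 1)) := by rw [h2]; linarith
      _ ≤ _ := by gcongr
  refine ⟨min c 1 / B, by positivity, t, ht, fun w => ?_⟩
  have h5 : min c 1 / B * t ^ w.length * (2 + k * w.length) ≤ min c 1 * r ^ w.length := by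
    calc min c 1 / B * t ^ w.length * (2 + k * w.length)
        ≤ min c 1 / B * t ^ w.length * (B * t ^ w.length) := by
          have := hlin w.length
          gcongr
      _ = min c 1 * r ^ w.length := by rw [htr, mul_pow]; field_simp
  refine h5.trans ?_
  rcases eq_or_ne w [] with rfl | hw
  · simpa using Or.inr (one_le_op _)
  · exact le_trans (by gcongr; exact min_le_left _ _) (h w hw)

lemma nrm_wordProd_le {ι : Type*} (A : ι → SL2) {C : ℝ} (hC1 : 1 ≤ C) (hC : ∀ i, op (A i) ≤ C)
    (y : Fin 2 → ℝ) (w : List ι) : nrm (act (wordProd A w) y) ≤ C ^ w.length * nrm y := by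
  induction w with
  | nil => simp [wordProd_nil, act_one]
  | cons i w ih =>
    rw [wordProd_cons, act_mul, List.length_cons, pow_succ']
    calc _ ≤ op (A i) * nrm (act (wordProd A w) y) := nrm_act_le _ _
      _ ≤ C * (C ^ w.length * nrm y) :=
        mul_le_mul (hC i) ih (nrm_nonneg _) (by linarith)
      _ = _ := by ring

/-- An orbit segment that is never shorter than its starting vector grows exponentially. -/
lemma expand_of_min {ι : Type*} {A : ι → SL2} {C c t : ℝ} (hC1 : 1 ≤ C) (hC : ∀ i, op (A i) ≤ C)
    (hgr : ∀ w : List ι, c * t ^ w.length * (2 + C ^ 4 * w.length) ≤ op (wordProd A w))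
    {y : Fin 2 → ℝ} (hy : y ≠ 0) (w : List ι)
    (h : ∀ u, u <:+ w → nrm y ≤ nrm (act (wordProd A u) y)) :
    nrm y * (c * t ^ w.length) ≤ nrm (act (wordProd A w) y) := by
  have hyp := nrm_pos hy
  have h1 := op_wordProd_le A hC hy w
  have h2 := profileSum_le_length A y hyp w h
  have h3 := h w (List.suffix_refl _)
  have h4 := hgr w
  set f := nrm (act (wordProd A w) y)
  have hf : 0 < f := hyp.trans_le h3
  have hρ : 1 ≤ f / nrm y := by rwa [one_le_div hyp]
  have hρ' : nrm y / f ≤ 1 := by rwa [div_le_one hf]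
  have h5 : C ^ 2 * profileSum A y w * nrm y * f ≤ C ^ 4 * w.length * (f / nrm y) := by
    calc C ^ 2 * profileSum A y w * nrm y * f ≤ C ^ 2 * (w.length / nrm y ^ 2) * nrm y * f := by
          gcongr
      _ = C ^ 2 * w.length * (f / nrm y) := by field_simp
      _ ≤ _ := by
        have : C ^ 2 ≤ C ^ 4 := pow_le_pow_right₀ hC1 (by norm_num)
        gcongr
  have h6 : c * t ^ w.length * (2 + C ^ 4 * w.length) ≤ f / nrm y * (2 + C ^ 4 * w.length) := by
    linarith
  have h7 := le_of_mul_le_mul_right h6 (by positivity)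
  rw [le_div_iff₀ hyp] at h7
  linarith

/-- An orbit segment whose ends have comparable length and which is never much shorter than
its ends has bounded length. -/
lemma short_of_concave {ι : Type*} {A : ι → SL2} {C c t : ℝ} (hC1 : 1 ≤ C)
    (hC : ∀ i, op (A i) ≤ C)
    (hgr : ∀ w : List ι, c * t ^ w.length * (2 + C ^ 4 * w.length) ≤ op (wordProd A w))
    {y : Fin 2 → ℝ} (hy : y ≠ 0) (w : List ι)
    (h : ∀ u, u <:+ w → nrm y / C ≤ nrm (act (wordProd A u) y))
    (hend : nrm (act (wordProd A w) y) ≤ nrm y) :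
    c * t ^ w.length ≤ 1 + C := by
  have hyp := nrm_pos hy
  have hC0 : 0 < C := by linarith
  have h1 := op_wordProd_le A hC hy w
  have h2 := profileSum_le_length A y (div_pos hyp hC0) w h
  have h3 := h w (List.suffix_refl _)
  have h4 := hgr w
  set f := nrm (act (wordProd A w) y)
  have hf : 0 < f := (div_pos hyp hC0).trans_le h3
  have hρ : f / nrm y ≤ 1 := by rwa [div_le_one hyp]
  have hρ' : nrm y / f ≤ C := by
    rw [div_le_iff₀ hC0] at h3
    rw [div_le_iff₀ hf]; linarith
  have h5 : C ^ 2 * profileSum A y w * nrm y * f ≤ C ^ 4 * w.length := by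
    calc C ^ 2 * profileSum A y w * nrm y * f
        ≤ C ^ 2 * (w.length / (nrm y / C) ^ 2) * nrm y * nrm y := by
          gcongr
      _ = C ^ 4 * w.length := by field_simp
  have h6 : c * t ^ w.length * (2 + C ^ 4 * w.length) ≤ (1 + C) * (2 + C ^ 4 * w.length) := by
    have : 0 ≤ C * (C ^ 4 * w.length) := by positivity
    nlinarith
  exact le_of_mul_le_mul_right h6 (by positivity)

/-- A vector with a sufficiently short preimage has a preimage of controlled length which is
shorter than every intermediate point of its orbit. -/
lemma exists_short_preimage {ι : Type*} {A : ι → SL2} {C δ : ℝ} (hC : ∀ i, op (A i) ≤ C)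
    (hδ1 : δ ≤ 1) {x : Fin 2 → ℝ}
    (hx : ∃ v : List ι, nrm (act (wordProd A v)⁻¹ x) < δ * nrm x) :
    ∃ (v : List ι) (y : Fin 2 → ℝ), act (wordProd A v) y = x ∧ nrm y < δ * nrm x ∧
      δ * nrm x ≤ C * nrm y ∧
      ∀ u, u <:+ v → u ≠ [] → δ * nrm x ≤ nrm (act (wordProd A u) y) := by
  classical
  have hex : ∃ n : ℕ, ∃ (v : List ι) (y : Fin 2 → ℝ), v.length = n ∧ act (wordProd A v) y = x ∧
      nrm y < δ * nrm x := by
    obtain ⟨v, hv⟩ := hx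
    exact ⟨v.length, v, _, rfl, act_act_inv _ _, hv⟩
  obtain ⟨v, y, hlen, hvy, hyδ⟩ := Nat.find_spec hex
  have hsuf : ∀ u, u <:+ v → u ≠ [] → δ * nrm x ≤ nrm (act (wordProd A u) y) := by
    rintro u ⟨v', rfl⟩ hu
    by_contra hlt
    push Not at hlt
    refine Nat.find_min hex (m := v'.length) ?_ ⟨v', _, rfl, ?_, hlt⟩
    · rw [← hlen, List.length_append]
      have := List.length_pos_iff.2 hu
      omega
    · rw [← act_mul, ← wordProd_append, hvy]
  refine ⟨v, y, hvy, hyδ, ?_, hsuf⟩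
  rcases List.eq_nil_or_concat v with rfl | ⟨v', i, rfl⟩
  · rw [wordProd_nil, act_one] at hvy
    subst hvy
    have := nrm_nonneg y
    nlinarith
  · have h1 := hsuf [i] ⟨v', by simp⟩ (by simp)
    refine h1.trans ?_
    rw [wordProd_cons, wordProd_nil, mul_one]
    exact (nrm_act_le _ _).trans (mul_le_mul_of_nonneg_right (hC i) (nrm_nonneg _))

/-- Domination: a vector which has been expanded by a definite factor in the past is never
close to the most contracted direction of any future product. -/
lemma domination {ι : Type*} [Finite ι] {A : ι → SL2} (hA : UniformlyHyperbolic A) :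
    ∃ δ > (0 : ℝ), ∃ c₀ > (0 : ℝ), c₀ ≤ 1 ∧ ∀ x : Fin 2 → ℝ, x ≠ 0 →
      (∃ v : List ι, nrm (act (wordProd A v)⁻¹ x) < δ * nrm x) →
      ∀ w : List ι, c₀ * op (wordProd A w) * nrm x ≤ nrm (act (wordProd A w) x) := by
  obtain ⟨C, hC1, hC⟩ := exists_op_bound A
  have hC0 : 0 < C := by linarith
  obtain ⟨c, hc, t, ht, hgr⟩ := growth hA (k := C ^ 4) (by positivity)
  obtain ⟨N, hN⟩ := pow_unbounded_of_one_lt ((1 + C) / c) ht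
  have hN' : ∀ n, N ≤ n → 1 + C < c * t ^ n := by
    intro n hn
    rw [div_lt_iff₀ hc] at hN
    have : t ^ N ≤ t ^ n := pow_le_pow_right₀ ht.le hn
    nlinarith
  set δ : ℝ := 1 / C ^ N with hδ
  have hδ0 : 0 < δ := by positivity
  have hδ1 : δ ≤ 1 := by
    rw [hδ, div_le_one (by positivity)]; exact one_le_pow₀ hC1
  have ht2 : 0 < t ^ 2 - 1 := by nlinarith
  set Z : ℝ := 1 / ((δ / C * c) ^ 2 * (t ^ 2 - 1)) with hZ
  have hZ0 : 0 < Z := by positivity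
  set M : ℝ := 1 + (C / δ) ^ 2 + C ^ 2 * Z with hM
  have hM1 : 1 ≤ M := by
    have : 0 ≤ (C / δ) ^ 2 + C ^ 2 * Z := by positivity
    rw [hM]; linarith
  refine ⟨δ, hδ0, 1 / M, by positivity, by rw [div_le_one (by linarith)]; exact hM1, ?_⟩
  intro x hx hv w
  have hxp := nrm_pos hx
  obtain ⟨v, y, hvy, hyδ, hyC, hsuf⟩ := exists_short_preimage hC hδ1 hv
  have hyp : 0 < nrm y := by
    have : 0 < δ * nrm x := by positivity
    by_contra h0
    have : nrm y = 0 := le_antisymm (not_lt.1 h0) (nrm_nonneg _)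
    rw [this] at hyC
    linarith
  have hy : y ≠ 0 := ne_zero_of_nrm_pos hyp
  have hlen : N ≤ v.length := by
    by_contra hlt
    push Not at hlt
    have h1 := nrm_wordProd_le A hC1 hC y v
    rw [hvy] at h1
    have h2 : C ^ v.length ≤ C ^ N := pow_le_pow_right₀ hC1 hlt.le
    have h3 : C ^ N * (δ * nrm x) = nrm x := by rw [hδ]; field_simp
    have h4 : C ^ v.length * nrm y < C ^ N * (δ * nrm x) :=
      mul_lt_mul' h2 hyδ hyp.le (by positivity)
    linarith
  -- The whole orbit of `y` never gets shorter than `y`: a first return to the length of `y`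
  -- would close an orbit segment which is too long for `short_of_concave`.
  have hmin : ∀ w : List ι, ∀ u, u <:+ w ++ v → nrm y ≤ nrm (act (wordProd A u) y) := by
    intro w
    induction w with
    | nil =>
      intro u hu
      rcases eq_or_ne u [] with rfl | hne
      · rw [wordProd_nil, act_one]
      · exact hyδ.le.trans (hsuf u (by simpa using hu) hne)
    | cons i w ih =>
      intro u hu
      rw [List.cons_append, List.suffix_cons_iff] at hu
      rcases hu with rfl | hu
      · by_contra hlt
        push Not at hlt
        have hshort := short_of_concave hC1 hC hgr hy (i :: (w ++ v)) ?_ hlt.le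
        · refine absurd hshort (not_le.2 (hN' _ ?_))
          simp; omega
        · intro u hu
          rw [List.suffix_cons_iff] at hu
          rw [div_le_iff₀ hC0]
          rcases hu with rfl | hu
          · have h1 := ih (w ++ v) (List.suffix_refl _)
            rw [wordProd_cons, act_mul]
            refine h1.trans ((nrm_le_act (A i) _).trans ?_)
            rw [mul_comm]
            exact mul_le_mul_of_nonneg_left (hC i) (nrm_nonneg _)
          · have h1 := ih u hu
            have := nrm_nonneg (act (wordProd A u) y)
            nlinarith
      · exact ih u hu
  have hxw : ∀ w : List ι, act (wordProd A w) x = act (wordProd A (w ++ v)) y := by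
    intro w; rw [wordProd_append, act_mul, hvy]
  have hyC' : δ / C * nrm x ≤ nrm y := by
    rw [div_mul_eq_mul_div, div_le_iff₀ hC0]; linarith
  have hgrow : ∀ u : List ι, (δ / C * nrm x * c) * t ^ u.length ≤ nrm (act (wordProd A u) x) := by
    intro u
    rw [hxw]
    refine le_trans ?_ (expand_of_min hC1 hC hgr hy (u ++ v) (hmin u))
    rw [mul_assoc]
    have : t ^ u.length ≤ t ^ (u ++ v).length := pow_le_pow_right₀ ht.le (by simp)
    gcongr
  have hS : profileSum A x w ≤ Z / nrm x ^ 2 := by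
    refine (profileSum_le_geom A x (by positivity) ht w fun u _ => hgrow u).trans ?_
    have h1 : 1 - (1 / t ^ 2) ^ w.length ≤ 1 := by
      have : 0 ≤ (1 / t ^ 2) ^ w.length := by positivity
      linarith
    refine (mul_le_of_le_one_right (by positivity) h1).trans (le_of_eq ?_)
    rw [hZ]; field_simp
  have hf : δ / C * nrm x ≤ nrm (act (wordProd A w) x) := by
    rw [hxw]; exact hyC'.trans (hmin w _ (List.suffix_refl _))
  have hop := op_wordProd_le A hC hx w
  set f := nrm (act (wordProd A w) x)
  have hfp : 0 < f := lt_of_lt_of_le (by positivity) hf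
  have h1 : nrm x / f ≤ (C / δ) ^ 2 * (f / nrm x) := by
    have h2 : nrm x ≤ C / δ * f := by
      have : nrm x = C / δ * (δ / C * nrm x) := by field_simp
      rw [this]; gcongr
    rw [div_le_iff₀ hfp]
    have h3 : nrm x ^ 2 ≤ (C / δ * f) ^ 2 := by gcongr
    have h4 : (C / δ) ^ 2 * (f / nrm x) * f = (C / δ * f) ^ 2 / nrm x := by
      field_simp
    rw [h4, le_div_iff₀ hxp]
    linarith
  have h2 : C ^ 2 * profileSum A x w * nrm x * f ≤ C ^ 2 * Z * (f / nrm x) := by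
    calc _ ≤ C ^ 2 * (Z / nrm x ^ 2) * nrm x * f := by gcongr
      _ = _ := by field_simp
  have h3 : op (wordProd A w) ≤ M * (f / nrm x) := by
    rw [hM]; linarith
  calc 1 / M * op (wordProd A w) * nrm x ≤ 1 / M * (M * (f / nrm x)) * nrm x := by gcongr
    _ = f := by field_simp

/-! ### Geometry and topology of the projective line -/

/-- The unit vector of angle `θ`. -/
def uvec (θ : ℝ) : Fin 2 → ℝ := ![Real.cos θ, Real.sin θ]

lemma nrm_uvec (θ : ℝ) : nrm (uvec θ) = 1 := by simp [nrm_eq, uvec]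

lemma area_uvec (a b : ℝ) : area (uvec a) (uvec b) = Real.sin (b - a) := by
  simp [area, uvec, Real.sin_sub]; ring

lemma mk_eq_mk_iff_area {u v : Fin 2 → ℝ} (hu : u ≠ 0) (hv : v ≠ 0) :
    (Projectivization.mk ℝ u hu = Projectivization.mk ℝ v hv) ↔ area u v = 0 := by
  rw [Projectivization.mk_eq_mk_iff']
  constructor
  · rintro ⟨a, rfl⟩
    simp [area]; ring
  · intro h
    rw [area] at h
    have hv2 : v 0 ^ 2 + v 1 ^ 2 ≠ 0 := by
      rw [← nrm_sq]; have := nrm_pos hv; positivity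
    refine ⟨(u 0 * v 0 + u 1 * v 1) / (v 0 ^ 2 + v 1 ^ 2), ?_⟩
    ext i
    fin_cases i
    · simp; field_simp; linear_combination (-v 1) * h
    · simp; field_simp; linear_combination (v 0) * h

lemma dir_eq_dir_iff {a b : ℝ} : dir a = dir b ↔ Real.sin (b - a) = 0 := by
  rw [← area_uvec]; exact mk_eq_mk_iff_area _ _

lemma dir_add_int_mul_pi (a : ℝ) (n : ℤ) : dir (a + n * Real.pi) = dir a := by
  rw [dir_eq_dir_iff]
  have : a - (a + n * Real.pi) = ((-n : ℤ) : ℝ) * Real.pi := by push_cast; ring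
  rw [this, Real.sin_int_mul_pi]

lemma mk_eq_dir_arg {v : Fin 2 → ℝ} (hv : v ≠ 0) :
    Projectivization.mk ℝ v hv = dir (Complex.arg ⟨v 0, v 1⟩) := by
  have h0 : (⟨v 0, v 1⟩ : ℂ) ≠ 0 := by
    intro h
    apply hv
    ext i
    fin_cases i
    · simpa using congrArg Complex.re h
    · simpa using congrArg Complex.im h
  refine (mk_eq_mk_iff_area _ _).2 ?_
  have hc := Complex.cos_arg h0
  have hs := Complex.sin_arg (⟨v 0, v 1⟩ : ℂ)
  simp only [area, Matrix.cons_val_zero, Matrix.cons_val_one, hc, hs]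
  ring

lemma exists_angle (x : RP1) : ∃ θ ∈ Set.Ico 0 Real.pi, dir θ = x := by
  induction x using Projectivization.ind with
  | h v hv =>
    rw [mk_eq_dir_arg]
    set a := Complex.arg ⟨v 0, v 1⟩
    obtain ⟨h1, h2⟩ := toIcoMod_mem_Ico Real.pi_pos 0 a
    refine ⟨toIcoMod Real.pi_pos 0 a, ⟨h1, by simpa using h2⟩, ?_⟩
    have := self_sub_toIcoDiv_zsmul Real.pi_pos 0 a
    rw [← this, zsmul_eq_mul]
    have h3 := dir_add_int_mul_pi a (-toIcoDiv Real.pi_pos 0 a)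
    rw [← h3]; push_cast; congr 1; ring

/-- The angle in `[0, π)` of a point of `ℝP¹`. -/
def ang (x : RP1) : ℝ := (exists_angle x).choose

lemma ang_mem (x : RP1) : ang x ∈ Set.Ico 0 Real.pi := (exists_angle x).choose_spec.1

lemma dir_ang (x : RP1) : dir (ang x) = x := (exists_angle x).choose_spec.2

/-- A unit vector representing a point of `ℝP¹`. -/
def vec (x : RP1) : Fin 2 → ℝ := uvec (ang x)

lemma nrm_vec (x : RP1) : nrm (vec x) = 1 := nrm_uvec _

lemma vec_ne_zero (x : RP1) : vec x ≠ 0 := cos_sin_ne_zero _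

lemma mk_vec (x : RP1) : Projectivization.mk ℝ (vec x) (vec_ne_zero x) = x := dir_ang x

/-- A vector in the line `x` is a multiple of `vec x`. -/
lemma eq_smul_vec {v : Fin 2 → ℝ} (hv : v ≠ 0) {x : RP1} (h : Projectivization.mk ℝ v hv = x) :
    ∃ c : ℝ, |c| = nrm v ∧ v = c • vec x := by
  rw [← mk_vec x, Projectivization.mk_eq_mk_iff'] at h
  obtain ⟨c, hc⟩ := h
  refine ⟨c, ?_, hc.symm⟩
  rw [← hc, nrm_smul, nrm_vec, mul_one]

lemma pact_mk (A : SL2) {v : Fin 2 → ℝ} (hv : v ≠ 0) :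
    pact A (Projectivization.mk ℝ v hv) = Projectivization.mk ℝ (act A v) (act_ne_zero A hv) := by
  rw [pact, Projectivization.map_mk]
  congr 1

lemma pact_mul (A B : SL2) (x : RP1) : pact (A * B) x = pact A (pact B x) := by
  rw [← mk_vec x, pact_mk, pact_mk, pact_mk]
  congr 1
  exact act_mul _ _ _

/-- The factor by which `A` stretches the vectors of the line `x`. -/
def str (A : SL2) (x : RP1) : ℝ := nrm (act A (vec x))

lemma str_nonneg (A : SL2) (x : RP1) : 0 ≤ str A x := nrm_nonneg _

lemma str_le (A : SL2) (x : RP1) : str A x ≤ op A := by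
  simpa [nrm_vec, str] using nrm_act_le A (vec x)

lemma act_vec (A : SL2) (x : RP1) : ∃ c : ℝ, |c| = str A x ∧ act A (vec x) = c • vec (pact A x) := by
  apply eq_smul_vec (act_ne_zero A (vec_ne_zero x))
  rw [← pact_mk A (vec_ne_zero x), mk_vec]

lemma str_dir (A : SL2) (θ : ℝ) : str A (dir θ) = nrm (act A (uvec θ)) := by
  obtain ⟨c, hc, h⟩ := eq_smul_vec (cos_sin_ne_zero θ) (x := dir θ) rfl
  change |c| = nrm (uvec θ) at hc
  change uvec θ = _ at h
  rw [nrm_uvec] at hc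
  rw [h, act_smul, nrm_smul, hc, one_mul, str]

/-- The sine of the angle between two lines. It is comparable to the angle metric, and transforms
under `SL₂` by the exact formula `sn_pact`. -/
def sn (x y : RP1) : ℝ := |area (vec x) (vec y)|

lemma sn_nonneg (x y : RP1) : 0 ≤ sn x y := abs_nonneg _

lemma sn_le_one (x y : RP1) : sn x y ≤ 1 := by
  simpa [nrm_vec, sn] using abs_area_le (vec x) (vec y)

lemma sn_dir (a b : ℝ) : sn (dir a) (dir b) = |Real.sin (b - a)| := by
  obtain ⟨c, hc, h⟩ := eq_smul_vec (cos_sin_ne_zero a) (x := dir a) rfl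
  obtain ⟨d, hd, k⟩ := eq_smul_vec (cos_sin_ne_zero b) (x := dir b) rfl
  change |c| = nrm (uvec a) at hc
  change |d| = nrm (uvec b) at hd
  change uvec a = _ at h
  change uvec b = _ at k
  rw [nrm_uvec] at hc hd
  rw [← area_uvec, h, k]
  have : area (c • vec (dir a)) (d • vec (dir b)) = c * d * area (vec (dir a)) (vec (dir b)) := by
    simp [area]; ring
  rw [this, abs_mul, abs_mul, hc, hd, sn]; ring

lemma sn_pact (A : SL2) (x y : RP1) :
    sn x y = str A x * str A y * sn (pact A x) (pact A y) := by
  obtain ⟨c, hc, h⟩ := act_vec A x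
  obtain ⟨d, hd, k⟩ := act_vec A y
  rw [sn, ← area_act A, h, k, ← hc, ← hd, sn, ← abs_mul, ← abs_mul]
  congr 1
  simp [area]; ring

lemma op_mul_sn_le (A : SL2) (x y : RP1) : op A * sn x y ≤ str A x + str A y := by
  simpa [nrm_vec, sn, str] using op_mul_area_le A (vec x) (vec y)

/-- A real number is close to a multiple of `π` when its sine is small. -/
lemma exists_int_near (t : ℝ) : ∃ n : ℤ, |t - n * Real.pi| ≤ Real.pi / 2 * |Real.sin t| := by
  have hpi := Real.pi_pos
  refine ⟨round (t / Real.pi), ?_⟩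
  set n := round (t / Real.pi)
  set s := t - n * Real.pi with hs
  have h1 : |s| ≤ Real.pi / 2 := by
    have := abs_sub_round (t / Real.pi)
    have h2 : s = (t / Real.pi - n) * Real.pi := by rw [hs]; field_simp
    rw [h2, abs_mul, abs_of_pos hpi]
    nlinarith
  have h3 : |Real.sin t| = Real.sin |s| := by
    have : t = s + n * Real.pi := by rw [hs]; ring
    rw [this, Real.sin_add_int_mul_pi, abs_mul, abs_neg_one_zpow, one_mul]
    exact (Real.abs_sin_eq_sin_abs_of_abs_le_pi (by linarith))
  have h4 := Real.mul_le_sin (abs_nonneg s) h1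
  rw [h3]
  calc |s| = Real.pi / 2 * (2 / Real.pi * |s|) := by field_simp
    _ ≤ _ := by gcongr

lemma continuous_dir : Continuous dir := continuous_coinduced_rng

lemma isOpenMap_dir : IsOpenMap dir := by
  intro U hU
  change IsOpen[TopologicalSpace.coinduced dir inferInstance] _
  rw [isOpen_coinduced]
  have : dir ⁻¹' (dir '' U) = ⋃ n : ℤ, (fun t : ℝ => t + n * Real.pi) ⁻¹' U := by
    ext t
    simp only [mem_preimage, mem_image, mem_iUnion]
    constructor
    · rintro ⟨u, hu, hut⟩
      rw [dir_eq_dir_iff, Real.sin_eq_zero_iff] at hut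
      obtain ⟨n, hn⟩ := hut
      refine ⟨-n, ?_⟩
      push_cast
      rwa [neg_mul, hn, show t + -(t - u) = u by ring]
    · rintro ⟨n, hn⟩
      exact ⟨_, hn, dir_add_int_mul_pi _ _⟩
  rw [this]
  exact isOpen_iUnion fun n => hU.preimage (by fun_prop)

instance : BorelSpace RP1 := ⟨rfl⟩

lemma isOpen_iff_dir {U : Set RP1} : IsOpen U ↔ IsOpen (dir ⁻¹' U) := by
  change IsOpen[TopologicalSpace.coinduced dir inferInstance] _ ↔ _
  rw [isOpen_coinduced]

lemma measurableSet_dir_Ico (a b : ℝ) : MeasurableSet (dir '' Set.Ico a b) := by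
  rcases le_or_gt b a with h | h
  · simp [Set.Ico_eq_empty (not_lt.2 h)]
  have hcl : IsClosed ({dir a} : Set RP1) := by
    rw [← isOpen_compl_iff, isOpen_iff_dir]
    have : dir ⁻¹' {dir a}ᶜ = {t : ℝ | Real.sin (a - t) ≠ 0} := by
      ext t; simp [dir_eq_dir_iff]
    rw [this]
    exact isOpen_ne_fun (by fun_prop) continuous_const
  rw [← Set.Ioo_insert_left h, Set.image_insert_eq, Set.insert_eq]
  exact hcl.measurableSet.union (isOpenMap_dir _ isOpen_Ioo).measurableSet

lemma continuous_act_uvec (A : SL2) : Continuous fun θ => act A (uvec θ) := by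
  refine continuous_pi fun i => ?_
  fin_cases i
  · simp only [Fin.zero_eta, act_apply_zero, uvec, Matrix.cons_val_zero, Matrix.cons_val_one]
    fun_prop
  · simp only [Fin.mk_one, act_apply_one, uvec, Matrix.cons_val_zero, Matrix.cons_val_one]
    fun_prop

lemma isOpen_str_lt (A : SL2) (δ : ℝ) : IsOpen {x | str A x < δ} := by
  rw [isOpen_iff_dir]
  have : dir ⁻¹' {x | str A x < δ} = {θ | nrm (act A (uvec θ)) < δ} := by
    ext θ; simp [str_dir]
  rw [this]
  have hc := continuous_act_uvec A
  refine isOpen_lt ?_ continuous_const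
  simp only [nrm_eq]
  fun_prop

lemma continuous_pact (A : SL2) : Continuous (pact A) := by
  refine continuous_coinduced_dom.2 (continuous_iff_continuousAt.2 fun θ₀ => ?_)
  have hne : ∀ θ, act A (uvec θ) ≠ 0 := fun θ => act_ne_zero A (cos_sin_ne_zero θ)
  have hc := continuous_act_uvec A
  set z : ℝ → ℂ := fun θ => ⟨act A (uvec θ) 0, act A (uvec θ) 1⟩ with hz
  have hzc : Continuous z := by
    have : z = fun θ => ((act A (uvec θ) 0 : ℝ) : ℂ) + (act A (uvec θ) 1 : ℝ) * Complex.I := by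
      ext θ
      exact Complex.mk_eq_add_mul_I _ _
    rw [this]; fun_prop
  have hz0 : ∀ θ, z θ ≠ 0 := by
    intro θ h
    apply hne θ
    ext i
    fin_cases i
    · simpa using congrArg Complex.re h
    · simpa using congrArg Complex.im h
  have h1 : ∀ θ, pact A (dir θ) = dir (Complex.arg (z θ)) := by
    intro θ
    rw [dir, pact_mk, ← mk_eq_dir_arg (hne θ)]
    rfl
  have h2 : ∀ θ, pact A (dir θ) = dir (Complex.arg (-z θ)) := by
    intro θ
    have hv : -act A (uvec θ) ≠ 0 := neg_ne_zero.2 (hne θ)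
    have : -z θ = ⟨(-act A (uvec θ)) 0, (-act A (uvec θ)) 1⟩ := by
      apply Complex.ext <;> simp [hz]
    rw [this, ← mk_eq_dir_arg hv, dir, pact_mk]
    refine (mk_eq_mk_iff_area _ _).2 ?_
    simp [area, uvec]; ring
  -- `arg` is continuous off the negative axis, and `z`, `-z` are not both there.
  by_cases hs : z θ₀ ∈ Complex.slitPlane
  · rw [show pact A ∘ dir = fun θ => dir (Complex.arg (z θ)) from funext h1]
    exact continuous_dir.continuousAt.comp
      (ContinuousAt.comp (Complex.continuousAt_arg hs) hzc.continuousAt)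
  · rw [show pact A ∘ dir = fun θ => dir (Complex.arg (-z θ)) from funext h2]
    have hs' : -z θ₀ ∈ Complex.slitPlane := by
      rw [Complex.mem_slitPlane_iff] at hs ⊢
      push Not at hs
      left
      rcases lt_or_eq_of_le hs.1 with h | h
      · simpa using h
      · exact absurd (Complex.ext h hs.2) (hz0 θ₀)
    exact continuous_dir.continuousAt.comp
      (ContinuousAt.comp (f := fun θ => -z θ) (Complex.continuousAt_arg hs')
        hzc.neg.continuousAt)

lemma measurable_pact (A : SL2) : Measurable (pact A) := (continuous_pact A).measurable

/-! ### Dyadic arcs -/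

lemma measurableSet_dyadic (n k : ℕ) : MeasurableSet (dyadic n k) := measurableSet_dir_Ico _ _

lemma measurableSet_dyadic2 (n k : ℕ) : MeasurableSet (dyadic2 n k) := measurableSet_dir_Ico _ _

lemma ang_dir {θ : ℝ} (h : θ ∈ Set.Ico 0 Real.pi) : ang (dir θ) = θ := by
  have h1 := ang_mem (dir θ)
  have h2 := dir_ang (dir θ)
  rw [dir_eq_dir_iff] at h2
  have h3 := (Real.sin_eq_zero_iff_of_lt_of_lt (by linarith [h.1, h1.2]) (by linarith [h.2, h1.1])).1
    h2
  linarith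

lemma mem_dyadic_iff {n k : ℕ} (hk : k < 2 ^ n) (x : RP1) :
    x ∈ dyadic n k ↔ (k : ℝ) ≤ ang x * 2 ^ n / Real.pi ∧ ang x * 2 ^ n / Real.pi < k + 1 := by
  have hpi := Real.pi_pos
  have h2 : (0 : ℝ) < 2 ^ n := by positivity
  have hiff : ∀ θ : ℝ, θ ∈ Set.Ico (Real.pi * k / 2 ^ n) (Real.pi * (k + 1) / 2 ^ n) ↔
      (k : ℝ) ≤ θ * 2 ^ n / Real.pi ∧ θ * 2 ^ n / Real.pi < k + 1 := by
    intro θ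
    rw [Set.mem_Ico, div_le_iff₀ h2, lt_div_iff₀ h2, le_div_iff₀ hpi, div_lt_iff₀ hpi,
      mul_comm Real.pi, mul_comm Real.pi]
  rw [← hiff]
  constructor
  · rintro ⟨θ, hθ, rfl⟩
    rw [ang_dir]
    · exact hθ
    · have hk' : (k : ℝ) + 1 ≤ 2 ^ n := by exact_mod_cast hk
      refine ⟨le_trans (by positivity) hθ.1, hθ.2.trans_le ?_⟩
      rw [div_le_iff₀ h2]
      gcongr
  · intro h
    exact ⟨_, h, dir_ang x⟩

lemma exists_mem_dyadic (n : ℕ) (x : RP1) : ∃ k < 2 ^ n, x ∈ dyadic n k := by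
  have hpi := Real.pi_pos
  obtain ⟨h0, h1⟩ := ang_mem x
  have hnn : 0 ≤ ang x * 2 ^ n / Real.pi := by positivity
  have hk : ⌊ang x * 2 ^ n / Real.pi⌋₊ < 2 ^ n := by
    rw [Nat.floor_lt hnn, div_lt_iff₀ hpi]
    push_cast
    have : (0 : ℝ) < 2 ^ n := by positivity
    nlinarith
  exact ⟨_, hk, (mem_dyadic_iff hk x).2 ⟨Nat.floor_le hnn, Nat.lt_floor_add_one _⟩⟩

lemma dyadic_unique {n j k : ℕ} (hj : j < 2 ^ n) (hk : k < 2 ^ n) {x : RP1}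
    (hxj : x ∈ dyadic n j) (hxk : x ∈ dyadic n k) : j = k := by
  rw [mem_dyadic_iff hj] at hxj
  rw [mem_dyadic_iff hk] at hxk
  have h1 : (j : ℝ) < k + 1 := by linarith
  have h2 : (k : ℝ) < j + 1 := by linarith
  have h1' : j < k + 1 := by exact_mod_cast h1
  have h2' : k < j + 1 := by exact_mod_cast h2
  omega

lemma dyadic_nested {s m j k : ℕ} (hj : j < 2 ^ (s + m)) (hk : k < 2 ^ s)
    (h : (dyadic (s + m) j ∩ dyadic s k).Nonempty) : dyadic (s + m) j ⊆ dyadic s k := by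
  obtain ⟨x, hxj, hxk⟩ := h
  have h2 : (0 : ℝ) < 2 ^ m := by positivity
  have key : ∀ y : RP1, ang y * 2 ^ (s + m) / Real.pi = (ang y * 2 ^ s / Real.pi) * 2 ^ m := by
    intro y; rw [pow_add]; ring
  rw [mem_dyadic_iff hj, key] at hxj
  rw [mem_dyadic_iff hk] at hxk
  intro y hy
  rw [mem_dyadic_iff hj, key] at hy
  rw [mem_dyadic_iff hk]
  set a := ang x * 2 ^ s / Real.pi
  set b := ang y * 2 ^ s / Real.pi
  have h3 : (j : ℝ) < (k + 1) * 2 ^ m := by nlinarith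
  have h4 : (k : ℝ) * 2 ^ m < j + 1 := by nlinarith
  have h3' : j < (k + 1) * 2 ^ m := by exact_mod_cast h3
  have h4' : k * 2 ^ m < j + 1 := by exact_mod_cast h4
  have h5 : (j : ℝ) + 1 ≤ (k + 1) * 2 ^ m := by exact_mod_cast h3'
  have h6 : (k : ℝ) * 2 ^ m ≤ j := by exact_mod_cast Nat.lt_succ_iff.1 h4'
  exact ⟨le_of_mul_le_mul_right (h6.trans hy.1) h2, lt_of_mul_lt_mul_right (hy.2.trans_le h5) h2.le⟩

lemma sn_le_of_mem_dyadic {n k : ℕ} {x y : RP1} (hx : x ∈ dyadic n k) (hy : y ∈ dyadic n k) :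
    sn x y ≤ 4 / 2 ^ n := by
  obtain ⟨a, ha, rfl⟩ := hx
  obtain ⟨b, hb, rfl⟩ := hy
  rw [sn_dir]
  have h1 : |Real.sin (b - a)| ≤ |b - a| := Real.abs_sin_le_abs
  have h2 : |b - a| ≤ Real.pi / 2 ^ n := by
    have h3 : Real.pi * (k + 1) / 2 ^ n = Real.pi * k / 2 ^ n + Real.pi / 2 ^ n := by ring
    rw [abs_le]
    constructor <;> linarith [ha.1, ha.2, hb.1, hb.2]
  refine h1.trans (h2.trans ?_)
  gcongr
  exact Real.pi_le_four

lemma mem_dyadic2_of_sn_lt {n k : ℕ} {x y : RP1} (hx : x ∈ dyadic n k)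
    (h : sn x y < 1 / 2 ^ n) : y ∈ dyadic2 n k := by
  obtain ⟨a, ha, rfl⟩ := hx
  rw [← dir_ang y, sn_dir] at h
  obtain ⟨z, hz⟩ := exists_int_near (ang y - a)
  have hpi := Real.pi_pos
  have h1 : |ang y - a - z * Real.pi| < Real.pi / 2 / 2 ^ n := by
    refine hz.trans_lt ?_
    have := mul_lt_mul_of_pos_left h (show 0 < Real.pi / 2 by positivity)
    simpa [div_eq_mul_inv] using this
  refine ⟨ang y + ((-z : ℤ) : ℝ) * Real.pi, ?_, by rw [dir_add_int_mul_pi, dir_ang]⟩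
  rw [abs_lt] at h1
  have e1 : Real.pi * ((k : ℝ) - 1 / 2) / 2 ^ n = Real.pi * k / 2 ^ n - Real.pi / 2 / 2 ^ n := by
    ring
  have e2 : Real.pi * ((k : ℝ) + 3 / 2) / 2 ^ n
      = Real.pi * (k + 1) / 2 ^ n + Real.pi / 2 / 2 ^ n := by ring
  rw [Set.mem_Ico, e1, e2]
  push_cast
  constructor <;> linarith [ha.1, ha.2, h1.1, h1.2]

lemma card_near_le (F : Finset ℕ) (t : ℝ) (N : ℕ) (h : ∀ k ∈ F, |(k : ℝ) - t| ≤ N) :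
    F.card ≤ 2 * N + 3 := by
  have hsub : F.image (fun k : ℕ => (k : ℤ)) ⊆ Finset.Icc (⌊t⌋ - N) (⌊t⌋ + N + 1) := by
    intro z hz
    obtain ⟨k, hk, rfl⟩ := Finset.mem_image.1 hz
    have h1 := abs_le.1 (h k hk)
    have h2 := Int.floor_le t
    have h3 := Int.lt_floor_add_one t
    rw [Finset.mem_Icc]
    constructor
    · have : ((⌊t⌋ - N : ℤ) : ℝ) ≤ ((k : ℤ) : ℝ) := by push_cast; linarith
      exact_mod_cast this
    · have : ((k : ℤ) : ℝ) ≤ ((⌊t⌋ + N + 1 : ℤ) : ℝ) := by push_cast; linarith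
      exact_mod_cast this
  have h1 := Finset.card_le_card hsub
  rw [Finset.card_image_of_injective _ Nat.cast_injective, Int.card_Icc] at h1
  omega

/-- A set of small diameter meets a bounded number of dyadic arcs of its own scale. -/
lemma card_dyadic_le (D : ℝ) : ∃ N : ℕ, ∀ (n : ℕ) (E : Set RP1),
    (∀ x ∈ E, ∀ y ∈ E, sn x y ≤ D / 2 ^ n) → ∀ F : Finset ℕ,
      (∀ k ∈ F, k < 2 ^ n ∧ (dyadic n k ∩ E).Nonempty) → F.card ≤ N := by
  classical
  obtain ⟨N, hN⟩ := exists_nat_ge (D / 2 + 1)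
  refine ⟨3 * (2 * N + 3), fun n E hE F hF => ?_⟩
  rcases F.eq_empty_or_nonempty with rfl | ⟨k₀, hk₀⟩
  · simp
  obtain ⟨x₀, -, hx₀⟩ := (hF k₀ hk₀).2
  have hpi := Real.pi_pos
  have h2 : (0 : ℝ) < 2 ^ n := by positivity
  set c : ℤ → ℝ := fun z => ang x₀ * 2 ^ n / Real.pi + z * 2 ^ n with hc
  have hcov : F ⊆ ({-1, 0, 1} : Finset ℤ).biUnion fun z => F.filter fun k => |(k : ℝ) - c z| ≤ N := by
    intro k hk
    obtain ⟨hk2, x, hxk, hxE⟩ := hF k hk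
    have hs := hE _ hx₀ _ hxE
    rw [← dir_ang x, ← dir_ang x₀, sn_dir] at hs
    rw [mem_dyadic_iff hk2] at hxk
    -- The integer nearest to `(ang x - ang x₀) / π` lies in `{-1, 0, 1}`.
    obtain ⟨z, hz⟩ := exists_int_near (ang x - ang x₀)
    have hx := ang_mem x
    have hx0 := ang_mem x₀
    have hz2 : |ang x - ang x₀ - z * Real.pi| ≤ Real.pi / 2 := by
      refine hz.trans (mul_le_of_le_one_right (by positivity) (Real.abs_sin_le_one _))
    have hz3 : |ang x - ang x₀ - z * Real.pi| ≤ Real.pi / 2 * (D / 2 ^ n) :=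
      hz.trans (by gcongr)
    have hzm : z ∈ ({-1, 0, 1} : Finset ℤ) := by
      rw [abs_le] at hz2
      have h5 : (z : ℝ) < 2 := by nlinarith [hx.1, hx.2, hx0.1, hx0.2]
      have h6 : (-2 : ℝ) < z := by nlinarith [hx.1, hx.2, hx0.1, hx0.2]
      have h5' : z < 2 := by exact_mod_cast h5
      have h6' : -2 < z := by exact_mod_cast h6
      simp only [Finset.mem_insert, Finset.mem_singleton]
      omega
    refine Finset.mem_biUnion.2 ⟨z, hzm, Finset.mem_filter.2 ⟨hk, ?_⟩⟩
    have h7 : |ang x * 2 ^ n / Real.pi - c z| ≤ D / 2 := by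
      have e : ang x * 2 ^ n / Real.pi - c z
          = (ang x - ang x₀ - z * Real.pi) * (2 ^ n / Real.pi) := by
        rw [hc]; field_simp; ring
      rw [e, abs_mul, abs_of_pos (show 0 < 2 ^ n / Real.pi by positivity)]
      calc _ ≤ Real.pi / 2 * (D / 2 ^ n) * (2 ^ n / Real.pi) := by gcongr
        _ = D / 2 := by field_simp
    rw [abs_le] at h7 ⊢
    constructor <;> linarith [hxk.1, hxk.2, h7.1, h7.2]
  refine (Finset.card_le_card hcov).trans (Finset.card_biUnion_le.trans ?_)
  calc _ ≤ ∑ z ∈ ({-1, 0, 1} : Finset ℤ), (2 * N + 3) :=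
        Finset.sum_le_sum fun z _ => card_near_le _ (c z) N fun k hk => (Finset.mem_filter.1 hk).2
    _ = 3 * (2 * N + 3) := by simp

/-- The `ν`-measure of a set of small diameter is at most a bounded multiple of the maximal
measure of a dyadic arc of its scale. -/
lemma measure_le_of_sn_le (D : ℝ) : ∃ N : ℕ, ∀ (ν : Measure RP1) [IsProbabilityMeasure ν] (n : ℕ)
    (a : ℝ), (∀ k < 2 ^ n, ν.real (dyadic n k) ≤ a) → ∀ E : Set RP1,
    (∀ x ∈ E, ∀ y ∈ E, sn x y ≤ D / 2 ^ n) → ν.real E ≤ N * a := by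
  classical
  obtain ⟨N, hN⟩ := card_dyadic_le D
  refine ⟨N, fun ν _ n a ha E hE => ?_⟩
  set F := (Finset.range (2 ^ n)).filter fun k => (dyadic n k ∩ E).Nonempty with hF
  have hsub : E ⊆ ⋃ k ∈ F, dyadic n k := by
    intro x hx
    obtain ⟨k, hk, hxk⟩ := exists_mem_dyadic n x
    exact mem_iUnion₂.2 ⟨k, by simp [hF, hk]; exact ⟨x, hxk, hx⟩, hxk⟩
  have hcard := hN n E hE F fun k hk => by simpa [hF] using hk
  have ha0 : 0 ≤ a := measureReal_nonneg.trans (ha 0 (by positivity))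
  calc ν.real E ≤ ν.real (⋃ k ∈ F, dyadic n k) := measureReal_mono hsub (measure_ne_top _ _)
    _ ≤ ∑ k ∈ F, ν.real (dyadic n k) := measureReal_biUnion_finset_le _ _
    _ ≤ ∑ k ∈ F, a := Finset.sum_le_sum fun k hk => ha k (by
        have := (Finset.mem_filter.1 hk).1
        simpa using this)
    _ = F.card * a := by simp
    _ ≤ N * a := by gcongr

lemma sum_dyadic_eq_one (ν : Measure RP1) [IsProbabilityMeasure ν] (n : ℕ) :
    ∑ k ∈ Finset.range (2 ^ n), ν.real (dyadic n k) = 1 := by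
  rw [← measureReal_biUnion_finset _ fun k _ => measurableSet_dyadic n k]
  · have : ⋃ k ∈ Finset.range (2 ^ n), dyadic n k = Set.univ := by
      refine Set.eq_univ_of_forall fun x => ?_
      obtain ⟨k, hk, hxk⟩ := exists_mem_dyadic n x
      exact mem_iUnion₂.2 ⟨k, by simpa using hk, hxk⟩
    rw [this, probReal_univ]
  · intro j hj k hk hjk
    refine Set.disjoint_left.2 fun x hxj hxk => hjk (dyadic_unique ?_ ?_ hxj hxk)
    · simpa using hj
    · simpa using hk

/-! ### Stationary measures -/

lemma stationary_real {ι : Type} [Fintype ι] {A : ι → SL2} {p : ι → ℝ} (hp : ∀ i, 0 < p i)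
    {ν : Measure RP1} [IsProbabilityMeasure ν] (hν : IsStationary A p ν) {E : Set RP1}
    (hE : MeasurableSet E) : ν.real E = ∑ i, p i * ν.real (pact (A i) ⁻¹' E) := by
  have h : ν E = ∑ i, ENNReal.ofReal (p i) * ν (pact (A i) ⁻¹' E) := by
    conv_lhs => rw [hν]
    simp [Measure.map_apply (measurable_pact _) hE]
  rw [measureReal_def, h, ENNReal.toReal_sum]
  · refine Finset.sum_congr rfl fun i _ => ?_
    rw [ENNReal.toReal_mul, ENNReal.toReal_ofReal (hp i).le, measureReal_def]
  · exact fun i _ => ENNReal.mul_ne_top ENNReal.ofReal_ne_top (measure_ne_top _ _)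

/-- A stationary measure is a convex combination of its images under products of norm
comparable to any prescribed `R ≥ 1`. -/
lemma stationary_family {ι : Type} [Fintype ι] {A : ι → SL2} (hA : UniformlyHyperbolic A)
    {p : ι → ℝ} (hp : ∀ i, 0 < p i) (hp1 : ∑ i, p i = 1)
    {ν : Measure RP1} [IsProbabilityMeasure ν] (hν : IsStationary A p ν)
    {C : ℝ} (hC1 : 1 ≤ C) (hC : ∀ i, op (A i) ≤ C) {R : ℝ} (hR : 1 ≤ R) :
    ∃ (J : Type) (_ : Fintype J) (a : J → ℝ) (w : J → List ι), (∀ j, 0 ≤ a j) ∧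
      (∀ E : Set RP1, MeasurableSet E →
        ν.real E = ∑ j, a j * ν.real (pact (wordProd A (w j)) ⁻¹' E)) ∧
      ∀ j, R ≤ op (wordProd A (w j)) ∧ op (wordProd A (w j)) ≤ C * R := by
  classical
  -- Words are extended letter by letter until their norm reaches `R`.
  have main : ∀ n : ℕ, ∃ (J : Type) (_ : Fintype J) (a : J → ℝ) (w : J → List ι), (∀ j, 0 ≤ a j) ∧
      (∀ E : Set RP1, MeasurableSet E →
        ν.real E = ∑ j, a j * ν.real (pact (wordProd A (w j)) ⁻¹' E)) ∧
      ∀ j, (R ≤ op (wordProd A (w j)) ∧ op (wordProd A (w j)) ≤ C * R) ∨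
        ((w j).length = n ∧ op (wordProd A (w j)) < R) := by
    intro n
    induction n with
    | zero =>
      refine ⟨Unit, inferInstance, fun _ => 1, fun _ => [], fun _ => zero_le_one, ?_, ?_⟩
      · intro E _
        have : pact (wordProd A []) = id := by
          ext x
          rw [wordProd_nil, ← mk_vec x, pact_mk]
          simp [act_one]
        simp [this]
      · intro _
        have h1 : op (wordProd A []) = 1 := by
          refine le_antisymm (op_le zero_le_one fun v => ?_) (one_le_op _)
          rw [wordProd_nil, act_one, one_mul]
        rw [h1]
        rcases lt_or_ge 1 R with h | h
        · exact Or.inr ⟨rfl, h⟩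
        · exact Or.inl ⟨h, by nlinarith⟩
    | succ n ih =>
      obtain ⟨J, hJ, a, w, ha, hE, hw⟩ := ih
      refine ⟨J × ι, inferInstance, fun x => a x.1 * p x.2,
        fun x => if R ≤ op (wordProd A (w x.1)) then w x.1 else w x.1 ++ [x.2],
        fun x => mul_nonneg (ha _) (hp _).le, ?_, ?_⟩
      · intro E hEm
        rw [hE E hEm, Fintype.sum_prod_type]
        refine Finset.sum_congr rfl fun j _ => ?_
        by_cases h : R ≤ op (wordProd A (w j))
        · simp only [if_pos h]
          rw [← Finset.sum_mul, ← Finset.mul_sum, hp1, mul_one]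
        · simp only [if_neg h]
          rw [stationary_real hp hν (measurable_pact _ hEm), Finset.mul_sum]
          refine Finset.sum_congr rfl fun i _ => ?_
          have : pact (wordProd A (w j ++ [i])) ⁻¹' E
              = pact (A i) ⁻¹' (pact (wordProd A (w j)) ⁻¹' E) := by
            ext x
            rw [wordProd_append, wordProd_cons, wordProd_nil, mul_one]
            simp [pact_mul]
          rw [this, mul_assoc]
      · rintro ⟨j, i⟩
        by_cases h : R ≤ op (wordProd A (w j))
        · simp only [if_pos h]
          rcases hw j with h1 | h1
          · exact Or.inl h1
          · exact absurd h (not_le.2 h1.2)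
        · simp only [if_neg h]
          rcases hw j with h1 | h1
          · exact absurd h1.1 h
          by_cases h2 : R ≤ op (wordProd A (w j ++ [i]))
          · refine Or.inl ⟨h2, ?_⟩
            rw [wordProd_append, wordProd_cons, wordProd_nil, mul_one]
            refine (op_mul_le _ _).trans ?_
            rw [mul_comm]
            exact mul_le_mul (hC i) h1.2.le (op_nonneg _) (by linarith)
          · refine Or.inr ⟨by simp [h1.1], not_le.1 h2⟩
  obtain ⟨c, hc, r, hr, hgr⟩ := hA
  obtain ⟨n, hn⟩ := pow_unbounded_of_one_lt (R / c) hr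
  obtain ⟨J, hJ, a, w, ha, hE, hw⟩ := main (n + 1)
  refine ⟨J, hJ, a, w, ha, hE, fun j => ?_⟩
  rcases hw j with h | h
  · exact h
  · exfalso
    have hne : w j ≠ [] := by
      rw [← List.length_pos_iff, h.1]; omega
    have h1 := hgr (w j) hne
    rw [h.1] at h1
    have h2 : r ^ n ≤ r ^ (n + 1) := pow_le_pow_right₀ hr.le (by omega)
    rw [div_lt_iff₀ hc] at hn
    have h3 := h.2
    rw [op] at h3
    nlinarith

/-- The points having a preimage under some product where the product expands by `1/δ`. -/
def expanded {ι : Type} (A : ι → SL2) (δ : ℝ) : Set RP1 :=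
  ⋃ v : List ι, {x | str (wordProd A v)⁻¹ x < δ}

lemma measurableSet_expanded {ι : Type} (A : ι → SL2) (δ : ℝ) :
    MeasurableSet (expanded A δ) :=
  (isOpen_iUnion fun _ => isOpen_str_lt _ _).measurableSet

lemma str_inv_mul_str (A : SL2) (x : RP1) : str A⁻¹ (pact A x) * str A x = 1 := by
  obtain ⟨c, hc, h⟩ := act_vec A x
  have h1 : act A⁻¹ (act A (vec x)) = vec x := act_inv_act A _
  rw [h, act_smul] at h1
  have h2 := congrArg nrm h1
  rw [nrm_smul, nrm_vec, hc] at h2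
  rw [str, mul_comm]; exact h2

/-- If the `ν`-mass of dyadic arcs tends to `0` uniformly with their length, then almost every
point has been expanded in its past. A point `A_w x` outside `expanded A δ` forces `‖A_w v‖ ≤ 1/δ`
for a unit vector `v` of the line `x`, so when `‖A_w‖` is large `x` is confined to a small
neighbourhood of the most contracted direction of `A_w`; stationarity averages these estimates. -/
lemma measure_expanded {ι : Type} [Fintype ι] {A : ι → SL2} (hA : UniformlyHyperbolic A)
    {p : ι → ℝ} (hp : ∀ i, 0 < p i) (hp1 : ∑ i, p i = 1)
    {ν : Measure RP1} [IsProbabilityMeasure ν] (hν : IsStationary A p ν)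
    (hna : ∀ a > (0 : ℝ), ∃ n : ℕ, ∀ k < 2 ^ n, ν.real (dyadic n k) ≤ a)
    {δ : ℝ} (hδ : 0 < δ) : ν.real (expanded A δ)ᶜ = 0 := by
  obtain ⟨C, hC1, hC⟩ := exists_op_bound A
  obtain ⟨N, hN⟩ := measure_le_of_sn_le 1
  refine le_antisymm (le_of_forall_pos_le_add fun ε hε => ?_) measureReal_nonneg
  obtain ⟨n, hn⟩ := hna (ε / (N + 1)) (by positivity)
  set R : ℝ := max 1 (2 / δ * 2 ^ n) with hR
  obtain ⟨J, _, a, w, ha, hE, hw⟩ := stationary_family hA hp hp1 hν hC1 hC (le_max_left 1 (2 / δ * 2 ^ n))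
  have hsum : ∑ j, a j = 1 := by
    have := hE Set.univ MeasurableSet.univ
    simpa using this.symm
  rw [zero_add, hE _ (measurableSet_expanded A δ).compl]
  have hj : ∀ j, ν.real (pact (wordProd A (w j)) ⁻¹' (expanded A δ)ᶜ) ≤ ε := by
    intro j
    -- Two points which are not expanded by a large product are close to its contracted direction.
    have hstr : ∀ x ∈ pact (wordProd A (w j)) ⁻¹' (expanded A δ)ᶜ,
        str (wordProd A (w j)) x ≤ 1 / δ := by
      intro x hx
      have h1 : δ ≤ str (wordProd A (w j))⁻¹ (pact (wordProd A (w j)) x) := by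
        by_contra h
        exact hx (mem_iUnion.2 ⟨w j, not_le.1 h⟩)
      have h2 := str_inv_mul_str (wordProd A (w j)) x
      have h3 := str_nonneg (wordProd A (w j)) x
      rw [le_div_iff₀ hδ]
      nlinarith
    have h := hN ν n _ hn (pact (wordProd A (w j)) ⁻¹' (expanded A δ)ᶜ) ?_
    · refine h.trans ?_
      rw [mul_div_assoc', div_le_iff₀ (by positivity)]
      nlinarith
    · intro x hx y hy
      have h1 := op_mul_sn_le (wordProd A (w j)) x y
      have h2 := hstr x hx
      have h3 := hstr y hy
      have h4 : 2 / δ * 2 ^ n ≤ op (wordProd A (w j)) := (le_max_right _ _).trans (hw j).1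
      have h5 : 2 / δ * 2 ^ n * sn x y ≤ 2 / δ := by
        calc _ ≤ op (wordProd A (w j)) * sn x y := by
              gcongr; exact sn_nonneg _ _
          _ ≤ 1 / δ + 1 / δ := by linarith
          _ = 2 / δ := by ring
      rw [le_div_iff₀ (by positivity)]
      have h6 : 2 / δ * (sn x y * 2 ^ n) ≤ 2 / δ * 1 := by linarith
      exact le_of_mul_le_mul_left h6 (by positivity)
  calc ∑ j, a j * ν.real (pact (wordProd A (w j)) ⁻¹' (expanded A δ)ᶜ)
      ≤ ∑ j, a j * ε := Finset.sum_le_sum fun j _ => mul_le_mul_of_nonneg_left (hj j) (ha j)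
    _ = ε := by rw [← Finset.sum_mul, hsum, one_mul]

/-! ### Comparison of `L^q` sums under an expanding map -/

lemma lqSum_nonneg (ν : Measure RP1) (q : ℝ) (m : ℕ) : 0 ≤ lqSum ν q m :=
  Finset.sum_nonneg fun _ _ => Real.rpow_nonneg ENNReal.toReal_nonneg _

/-- If `B` expands a set `S` of full measure by a factor comparable to `2 ^ (-s)`, then the `L^q`
sum at scale `2 ^ (-(s + m))` of the image of `ν` is controlled by that of `ν` at scale
`2 ^ (-m)`: arcs of these two sizes correspond to each other up to bounded multiplicity. -/
lemma image_sum_le {D q : ℝ} (hD : 0 ≤ D) (hq : 1 < q) : ∃ C₃ > (0 : ℝ), ∀ (ν : Measure RP1)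
    [IsProbabilityMeasure ν] (S : Set RP1) (B : SL2) (s m : ℕ), ν.real Sᶜ = 0 →
    (∀ x ∈ S, ∀ y ∈ S, sn x y ≤ D * 2 ^ s * sn (pact B x) (pact B y)) →
    (∀ x ∈ S, ∀ y ∈ S, 2 ^ s * sn (pact B x) (pact B y) ≤ sn x y) →
    ∀ F : Finset ℕ, (∀ j ∈ F, j < 2 ^ (s + m)) →
      ∑ j ∈ F, ν.real (pact B ⁻¹' dyadic (s + m) j) ^ q ≤ C₃ * lqSum ν q m := by
  classical
  obtain ⟨N, hN⟩ := card_dyadic_le (4 * D)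
  obtain ⟨N', hN'⟩ := card_dyadic_le 4
  refine ⟨((N + 1 : ℕ) : ℝ) ^ (q - 1) * (N' + 1 : ℕ), by positivity,
    fun ν _ S B s m hS h1 h2 F hF => ?_⟩
  have hs : (0 : ℝ) < 2 ^ s := by positivity
  set E : ℕ → Set RP1 := fun j => pact B ⁻¹' dyadic (s + m) j ∩ S with hE
  set G : ℕ → Finset ℕ := fun j => (Finset.range (2 ^ m)).filter fun l =>
    (dyadic m l ∩ E j).Nonempty with hG
  have hGcard : ∀ j, (G j).card ≤ N + 1 := by
    intro j
    refine (hN m (E j) ?_ (G j) fun l hl => by simpa [hG] using hl).trans (Nat.le_succ N)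
    rintro x ⟨hx, hxS⟩ y ⟨hy, hyS⟩
    have h3 := h1 x hxS y hyS
    have h4 := sn_le_of_mem_dyadic hx hy
    calc sn x y ≤ D * 2 ^ s * (4 / 2 ^ (s + m)) := h3.trans (by gcongr)
      _ = 4 * D / 2 ^ m := by rw [pow_add]; field_simp
  have hcov : ∀ j, ν.real (pact B ⁻¹' dyadic (s + m) j) ≤ ∑ l ∈ G j, ν.real (dyadic m l) := by
    intro j
    have hsub : pact B ⁻¹' dyadic (s + m) j ⊆ Sᶜ ∪ ⋃ l ∈ G j, dyadic m l := by
      intro x hx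
      by_cases hxS : x ∈ S
      · obtain ⟨l, hl, hxl⟩ := exists_mem_dyadic m x
        refine Or.inr (mem_iUnion₂.2 ⟨l, ?_, hxl⟩)
        simp only [hG, Finset.mem_filter, Finset.mem_range]
        exact ⟨hl, x, hxl, hx, hxS⟩
      · exact Or.inl hxS
    calc _ ≤ ν.real (Sᶜ ∪ ⋃ l ∈ G j, dyadic m l) := measureReal_mono hsub (measure_ne_top _ _)
      _ ≤ ν.real Sᶜ + ν.real (⋃ l ∈ G j, dyadic m l) := measureReal_union_le _ _
      _ ≤ 0 + ∑ l ∈ G j, ν.real (dyadic m l) := by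
          rw [hS]; gcongr; exact measureReal_biUnion_finset_le _ _
      _ = _ := zero_add _
  calc ∑ j ∈ F, ν.real (pact B ⁻¹' dyadic (s + m) j) ^ q
      ≤ ∑ j ∈ F, ((N + 1 : ℕ) : ℝ) ^ (q - 1) * ∑ l ∈ G j, ν.real (dyadic m l) ^ q := by
        refine Finset.sum_le_sum fun j _ => ?_
        calc _ ≤ (∑ l ∈ G j, ν.real (dyadic m l)) ^ q := by
              gcongr
              exact hcov j
          _ ≤ ((G j).card : ℝ) ^ (q - 1) * ∑ l ∈ G j, ν.real (dyadic m l) ^ q :=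
              Real.rpow_sum_le_const_mul_sum_rpow_of_nonneg _ hq.le
                fun _ _ => measureReal_nonneg
          _ ≤ _ := by
              have h0 : 0 ≤ ∑ l ∈ G j, ν.real (dyadic m l) ^ q :=
                Finset.sum_nonneg fun _ _ => by positivity
              have hc : ((G j).card : ℝ) ≤ (N + 1 : ℕ) := by exact_mod_cast hGcard j
              have hq' : 0 ≤ q - 1 := by linarith
              gcongr
    _ = ((N + 1 : ℕ) : ℝ) ^ (q - 1) * ∑ l ∈ Finset.range (2 ^ m),
          ∑ j ∈ F.filter (fun j => l ∈ G j), ν.real (dyadic m l) ^ q := by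
        rw [← Finset.mul_sum]
        congr 1
        refine Finset.sum_comm' fun j l => ?_
        simp only [hG, Finset.mem_filter, Finset.mem_range]
        tauto
    _ ≤ ((N + 1 : ℕ) : ℝ) ^ (q - 1) * ∑ l ∈ Finset.range (2 ^ m),
          ((N' + 1 : ℕ) : ℝ) * ν.real (dyadic m l) ^ q := by
        gcongr with l hl
        rw [Finset.sum_const, nsmul_eq_mul]
        gcongr
        refine (hN' (s + m) (pact B '' (dyadic m l ∩ S)) ?_ _ ?_).trans (Nat.le_succ N')
        · rintro _ ⟨x, ⟨hx, hxS⟩, rfl⟩ _ ⟨y, ⟨hy, hyS⟩, rfl⟩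
          have h3 := (h2 x hxS y hyS).trans (sn_le_of_mem_dyadic hx hy)
          rw [mul_comm, ← le_div_iff₀ hs] at h3
          refine h3.trans_eq ?_
          rw [pow_add]; field_simp
        · intro j hj
          obtain ⟨hjF, hlG⟩ := Finset.mem_filter.1 hj
          refine ⟨hF j hjF, ?_⟩
          obtain ⟨x, hxl, hx, hxS⟩ := (Finset.mem_filter.1 hlG).2
          exact ⟨pact B x, hx, x, ⟨hxl, hxS⟩, rfl⟩
    _ = _ := by
        rw [← Finset.mul_sum, ← mul_assoc]; rfl

/-! ### The local `L^q` bound -/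

/-- The local `L^q` bound: inside an arc of length `2 ^ (-s)`, the `L^q` sum of a nonatomic
stationary measure at scale `2 ^ (-(s + m))` is controlled by the global one at scale `2 ^ (-m)`. -/
lemma local_bound {ι : Type} [Fintype ι] {A : ι → SL2} (hA : UniformlyHyperbolic A)
    {p : ι → ℝ} (hp : ∀ i, 0 < p i) (hp1 : ∑ i, p i = 1)
    {ν : Measure RP1} [IsProbabilityMeasure ν] (hν : IsStationary A p ν)
    (hna : ∀ a > (0 : ℝ), ∃ n : ℕ, ∀ k < 2 ^ n, ν.real (dyadic n k) ≤ a)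
    {q : ℝ} (hq : 1 < q) : ∃ C₃ > (0 : ℝ), ∀ s m k : ℕ, k < 2 ^ s → ∀ F : Finset ℕ,
      (∀ j ∈ F, j < 2 ^ (s + m) ∧ (dyadic (s + m) j ∩ dyadic s k).Nonempty) →
      ∑ j ∈ F, ν.real (dyadic (s + m) j) ^ q
        ≤ C₃ * ν.real (dyadic2 s k) ^ q * lqSum ν q m := by
  classical
  obtain ⟨C, hC1, hC⟩ := exists_op_bound A
  obtain ⟨δ, hδ, c₀, hc₀, hc₁, hdom⟩ := domination hA
  obtain ⟨C₃, hC₃, himg⟩ := image_sum_le (D := C ^ 2 * 2 / c₀ ^ 2) (by positivity) hq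
  refine ⟨C₃, hC₃, fun s m k hk F hF => ?_⟩
  set S := expanded A δ with hSdef
  have hS0 : ν.real Sᶜ = 0 := measure_expanded hA hp hp1 hν hna hδ
  have hSm : MeasurableSet S := measurableSet_expanded A δ
  have hSstr : ∀ x ∈ S, ∀ w, c₀ * op (wordProd A w) ≤ str (wordProd A w) x := by
    intro x hx w
    obtain ⟨v, hv⟩ := mem_iUnion.1 hx
    have := hdom (vec x) (vec_ne_zero x) ⟨v, by rw [nrm_vec, mul_one]; exact hv⟩ w
    rwa [nrm_vec, mul_one] at this
  -- With this `R`, products of norm about `R` map `S` to diameter less than `2 ^ (-s)`.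
  set R : ℝ := Real.sqrt (2 * 2 ^ s / c₀ ^ 2) with hRdef
  have h2s : (1 : ℝ) ≤ 2 ^ s := one_le_pow₀ one_le_two
  have hR2 : R ^ 2 = 2 * 2 ^ s / c₀ ^ 2 := Real.sq_sqrt (by positivity)
  have hcR : c₀ ^ 2 * R ^ 2 = 2 * 2 ^ s := by rw [hR2]; field_simp
  have hR : 1 ≤ R := by
    rw [hRdef, Real.one_le_sqrt, one_le_div (by positivity)]
    nlinarith
  obtain ⟨J, _, a, w, ha, hE, hw⟩ := stationary_family hA hp hp1 hν hC1 hC hR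
  have hupper : ∀ i, ∀ x ∈ S, ∀ y ∈ S, sn x y ≤ C ^ 2 * 2 / c₀ ^ 2 * 2 ^ s *
      sn (pact (wordProd A (w i)) x) (pact (wordProd A (w i)) y) := by
    intro i x _ y _
    have e : C ^ 2 * 2 / c₀ ^ 2 * 2 ^ s = (C * R) * (C * R) := by
      rw [show (C * R) * (C * R) = C ^ 2 * R ^ 2 by ring, hR2]; ring
    rw [sn_pact (wordProd A (w i)) x y, e]
    have := sn_nonneg (pact (wordProd A (w i)) x) (pact (wordProd A (w i)) y)
    have h1 := (str_le (wordProd A (w i)) x).trans (hw i).2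
    have h2 := (str_le (wordProd A (w i)) y).trans (hw i).2
    have h3 := str_nonneg (wordProd A (w i)) y
    gcongr
  have hlower : ∀ i, ∀ x ∈ S, ∀ y ∈ S, 2 * 2 ^ s *
      sn (pact (wordProd A (w i)) x) (pact (wordProd A (w i)) y) ≤ sn x y := by
    intro i x hx y hy
    rw [sn_pact (wordProd A (w i)) x y, ← hcR, show c₀ ^ 2 * R ^ 2 = (c₀ * R) * (c₀ * R) by ring]
    have := sn_nonneg (pact (wordProd A (w i)) x) (pact (wordProd A (w i)) y)
    have hle : c₀ * R ≤ c₀ * op (wordProd A (w i)) := by gcongr; exact (hw i).1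
    have h1 := hle.trans (hSstr x hx (w i))
    have h2 := hle.trans (hSstr y hy (w i))
    have h3 := str_nonneg (wordProd A (w i)) x
    gcongr
  set T : Finset J := Finset.univ.filter fun i =>
    ∃ x ∈ S, pact (wordProd A (w i)) x ∈ dyadic s k with hT
  have hTsum : ∑ i ∈ T, a i ≤ ν.real (dyadic2 s k) := by
    rw [hE _ (measurableSet_dyadic2 s k)]
    calc ∑ i ∈ T, a i ≤ ∑ i ∈ T, a i * ν.real (pact (wordProd A (w i)) ⁻¹' dyadic2 s k) := by
          refine Finset.sum_le_sum fun i hi => ?_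
          obtain ⟨x, hxS, hx⟩ := (Finset.mem_filter.1 hi).2
          have hsub : S ⊆ pact (wordProd A (w i)) ⁻¹' dyadic2 s k := by
            intro y hy
            refine mem_dyadic2_of_sn_lt hx ?_
            have h1 := (hlower i x hxS y hy).trans (sn_le_one x y)
            rw [lt_div_iff₀ (by positivity)]
            linarith
          have h1 : ν.real S = 1 := by
            have := probReal_add_probReal_compl (μ := ν) hSm
            linarith
          have h2 : 1 ≤ ν.real (pact (wordProd A (w i)) ⁻¹' dyadic2 s k) := by
            rw [← h1]; exact measureReal_mono hsub (measure_ne_top _ _)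
          exact le_mul_of_one_le_right (ha i) h2
      _ ≤ _ := Finset.sum_le_sum_of_subset_of_nonneg (Finset.subset_univ _)
          fun i _ _ => mul_nonneg (ha i) measureReal_nonneg
  have hJ : ∀ j ∈ F, ν.real (dyadic (s + m) j) ^ q ≤ ν.real (dyadic2 s k) ^ (q - 1) *
      ∑ i ∈ T, a i * ν.real (pact (wordProd A (w i)) ⁻¹' dyadic (s + m) j) ^ q := by
    intro j hj
    have h1 : ν.real (dyadic (s + m) j)
        = ∑ i ∈ T, a i * ν.real (pact (wordProd A (w i)) ⁻¹' dyadic (s + m) j) := by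
      rw [hE _ (measurableSet_dyadic _ _)]
      symm
      refine Finset.sum_subset (Finset.subset_univ _) fun i _ hi => ?_
      have hsub : pact (wordProd A (w i)) ⁻¹' dyadic (s + m) j ⊆ Sᶜ := by
        intro x hx hxS
        exact hi (Finset.mem_filter.2 ⟨Finset.mem_univ _, x, hxS,
          dyadic_nested (hF j hj).1 hk (hF j hj).2 hx⟩)
      have h0 : ν.real (pact (wordProd A (w i)) ⁻¹' dyadic (s + m) j) = 0 :=
        le_antisymm ((measureReal_mono hsub (measure_ne_top _ _)).trans hS0.le) measureReal_nonneg
      rw [h0, mul_zero]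
    have h2 := Real.inner_le_weight_mul_Lp_of_nonneg T hq.le a
      (fun i => ν.real (pact (wordProd A (w i)) ⁻¹' dyadic (s + m) j)) ha
      (fun _ => measureReal_nonneg)
    rw [← h1] at h2
    have hA0 : 0 ≤ ∑ i ∈ T, a i := Finset.sum_nonneg fun i _ => ha i
    have hB0 : 0 ≤ ∑ i ∈ T, a i * ν.real (pact (wordProd A (w i)) ⁻¹' dyadic (s + m) j) ^ q :=
      Finset.sum_nonneg fun i _ => mul_nonneg (ha i) (Real.rpow_nonneg measureReal_nonneg _)
    calc ν.real (dyadic (s + m) j) ^ q ≤ _ := Real.rpow_le_rpow measureReal_nonneg h2 (by linarith)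
      _ = (∑ i ∈ T, a i) ^ (q - 1) *
          ∑ i ∈ T, a i * ν.real (pact (wordProd A (w i)) ⁻¹' dyadic (s + m) j) ^ q := by
          rw [Real.mul_rpow (by positivity) (by positivity), ← Real.rpow_mul hA0,
            ← Real.rpow_mul hB0, inv_mul_cancel₀ (by linarith), Real.rpow_one]
          congr 2
          field_simp
      _ ≤ _ := by
          have : 0 ≤ q - 1 := by linarith
          gcongr
  have hV : 0 ≤ ν.real (dyadic2 s k) := measureReal_nonneg
  have hL := lqSum_nonneg ν q m
  calc ∑ j ∈ F, ν.real (dyadic (s + m) j) ^ q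
      ≤ ∑ j ∈ F, ν.real (dyadic2 s k) ^ (q - 1) *
        ∑ i ∈ T, a i * ν.real (pact (wordProd A (w i)) ⁻¹' dyadic (s + m) j) ^ q :=
        Finset.sum_le_sum hJ
    _ = ν.real (dyadic2 s k) ^ (q - 1) * ∑ i ∈ T, a i *
        ∑ j ∈ F, ν.real (pact (wordProd A (w i)) ⁻¹' dyadic (s + m) j) ^ q := by
        rw [← Finset.mul_sum, Finset.sum_comm]
        simp only [Finset.mul_sum]
    _ ≤ ν.real (dyadic2 s k) ^ (q - 1) * ∑ i ∈ T, a i * (C₃ * lqSum ν q m) := by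
        gcongr with i _
        · exact ha i
        · refine himg ν S (wordProd A (w i)) s m hS0 (hupper i) (fun x hx y hy => ?_) F
            fun j hj => (hF j hj).1
          have h1 := hlower i x hx y hy
          have h2 := sn_nonneg (pact (wordProd A (w i)) x) (pact (wordProd A (w i)) y)
          nlinarith
    _ ≤ ν.real (dyadic2 s k) ^ (q - 1) * (ν.real (dyadic2 s k) * (C₃ * lqSum ν q m)) := by
        rw [← Finset.sum_mul]
        gcongr
    _ = C₃ * ν.real (dyadic2 s k) ^ q * lqSum ν q m := by
        have : ν.real (dyadic2 s k) ^ q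
            = ν.real (dyadic2 s k) ^ (q - 1) * ν.real (dyadic2 s k) := by
          rw [← Real.rpow_add_one' hV (by linarith)]; congr 1; ring
        rw [this]; ring

/-! ### The `L^q` spectrum and Hölder's inequality -/

lemma lqSum_le_one (ν : Measure RP1) [IsProbabilityMeasure ν] {q : ℝ} (hq : 1 ≤ q) (m : ℕ) :
    lqSum ν q m ≤ 1 := by
  rw [← sum_dyadic_eq_one ν m]
  exact Finset.sum_le_sum fun k _ =>
    Real.rpow_le_self_of_le_one measureReal_nonneg measureReal_le_one hq

/-- The `L^q` sums decay eventually at any rate below the spectrum. The junk values of `liminf`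
are excluded because the sums are at most `1`, and an `L^q` sum equal to `0` causes no harm. -/
lemma lqSum_le_of_lt (ν : Measure RP1) [IsProbabilityMeasure ν] {q t : ℝ} (hq : 1 ≤ q)
    (ht : t < lqSpectrum ν q) : ∀ᶠ m : ℕ in atTop, lqSum ν q m ≤ (2 : ℝ) ^ (-t * m) := by
  have hb : IsBoundedUnder (· ≥ ·) atTop
      fun m : ℕ => -(1 / (m : ℝ)) * Real.logb 2 (lqSum ν q m) := by
    refine isBoundedUnder_of ⟨0, fun m => ?_⟩
    have h1 : Real.logb 2 (lqSum ν q m) ≤ 0 :=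
      Real.logb_nonpos one_lt_two (lqSum_nonneg _ _ _) (lqSum_le_one ν hq m)
    have h2 : 0 ≤ 1 / (m : ℝ) := by positivity
    change 0 ≤ _
    nlinarith
  filter_upwards [eventually_lt_of_lt_liminf ht hb, eventually_gt_atTop 0] with m hm hm0
  rcases (lqSum_nonneg ν q m).eq_or_lt with h0 | h0
  · rw [← h0]; positivity
  · have hm' : (0 : ℝ) < m := by exact_mod_cast hm0
    rw [← Real.logb_le_iff_le_rpow one_lt_two h0]
    have h1 : -(1 / (m : ℝ)) * Real.logb 2 (lqSum ν q m) = -Real.logb 2 (lqSum ν q m) / m := by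
      ring
    rw [h1, lt_div_iff₀ hm'] at hm
    linarith

/-- The `L^q` spectrum vanishes if at every scale some dyadic arc has mass at least a fixed
constant, as happens when `ν` has an atom. -/
lemma lqSpectrum_eq_zero (ν : Measure RP1) [IsProbabilityMeasure ν] {q a : ℝ} (hq : 1 ≤ q)
    (ha : 0 < a) (h : ∀ n : ℕ, ∃ k < 2 ^ n, a < ν.real (dyadic n k)) : lqSpectrum ν q = 0 := by
  have hlow : ∀ m, a ^ q ≤ lqSum ν q m := by
    intro m
    obtain ⟨k, hk, hak⟩ := h m
    have h1 : ν.real (dyadic m k) ^ q ≤ lqSum ν q m :=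
      Finset.single_le_sum (f := fun k => ν.real (dyadic m k) ^ q)
        (fun _ _ => Real.rpow_nonneg measureReal_nonneg _) (Finset.mem_range.2 hk)
    exact (Real.rpow_le_rpow ha.le hak.le (by linarith)).trans h1
  have haq : 0 < a ^ q := Real.rpow_pos_of_pos ha q
  refine Tendsto.liminf_eq ?_
  have hlim : Tendsto (fun m : ℕ => -Real.logb 2 (a ^ q) / (m : ℝ)) atTop (𝓝 0) :=
    tendsto_const_div_atTop_nhds_zero_nat _
  refine tendsto_of_tendsto_of_tendsto_of_le_of_le tendsto_const_nhds hlim (fun m => ?_)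
    (fun m => ?_)
  · have h1 : Real.logb 2 (lqSum ν q m) ≤ 0 :=
      Real.logb_nonpos one_lt_two (lqSum_nonneg _ _ _) (lqSum_le_one ν hq m)
    have h2 : 0 ≤ 1 / (m : ℝ) := by positivity
    change 0 ≤ -(1 / (m : ℝ)) * Real.logb 2 (lqSum ν q m)
    nlinarith
  · have h1 := Real.logb_le_logb_of_le one_lt_two haq (hlow m)
    have h2 : 0 ≤ 1 / (m : ℝ) := by positivity
    change -(1 / (m : ℝ)) * Real.logb 2 (lqSum ν q m) ≤ -Real.logb 2 (a ^ q) / (m : ℝ)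
    rw [show -Real.logb 2 (a ^ q) / (m : ℝ) = -(1 / (m : ℝ)) * Real.logb 2 (a ^ q) by ring]
    nlinarith

/-- Hölder's inequality: an `ℓ^q` sum over a small index set in terms of an `ℓ^(q + h)` sum. -/
lemma sum_rpow_le_card (F : Finset ℕ) (f : ℕ → ℝ) (hf : ∀ j, 0 ≤ f j) {q h : ℝ} (hq : 0 < q)
    (hh : 0 < h) : ∑ j ∈ F, f j ^ q
      ≤ (F.card : ℝ) ^ (h / (q + h)) * (∑ j ∈ F, f j ^ (q + h)) ^ (q / (q + h)) := by
  have h1 : 1 ≤ (q + h) / q := by rw [one_le_div hq]; linarith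
  have := Real.inner_le_weight_mul_Lp_of_nonneg F h1 (fun _ => 1) (fun j => f j ^ q)
    (fun _ => zero_le_one) (fun j => Real.rpow_nonneg (hf j) _)
  simp only [one_mul, Finset.sum_const, nsmul_eq_mul, mul_one] at this
  convert this using 2
  · congr 1; field_simp; ring
  · congr 1
    · refine Finset.sum_congr rfl fun j _ => ?_
      rw [← Real.rpow_mul (hf j)]; congr 1; field_simp
    · field_simp

/-- The numerology of the choice of `h`, `ε` and `η` in terms of `κ`. -/
lemma exponent_le {α τ τ' κ q h : ℝ} (hq : 0 < q) (hh : 0 < h)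
    (h1 : (α - κ / (2 * q)) * h < τ' - τ) :
    (α * q - τ - κ) * (h / (q + h)) + -(τ' - 2 * (κ * h / (8 * q))) * (q / (q + h))
      ≤ -(τ + κ * h / (4 * (q + h))) := by
  have hqh : 0 < q + h := by linarith
  have e : (α * q - τ - κ) * (h / (q + h)) + -(τ' - 2 * (κ * h / (8 * q))) * (q / (q + h))
      = ((α * q - τ - κ) * h - (τ' - 2 * (κ * h / (8 * q))) * q) / (q + h) := by ring
  rw [e, div_le_iff₀ hqh]
  have e1 : κ * h / (8 * q) * q = κ * h / 8 := by field_simp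
  have e2 : κ * h / (4 * (q + h)) * (q + h) = κ * h / 4 := by field_simp
  have e3 : (α - κ / (2 * q)) * h * q = α * h * q - κ * h / 2 := by field_simp
  have h3 := mul_lt_mul_of_pos_right h1 hq
  rw [e3] at h3
  linarith

/-- The final product of Hölder's inequality, with its exponents collected. -/
lemma two_rpow_combine {a b c q h t V : ℝ} (hqh : 0 < q + h) (hV : 0 ≤ V) (ht : 0 ≤ t)
    (habc : a * (h / (q + h)) + b * (q / (q + h)) ≤ c) :
    ((2 : ℝ) ^ (a * t)) ^ (h / (q + h)) * ((2 : ℝ) ^ (b * t) * V ^ (q + h)) ^ (q / (q + h))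
      ≤ (2 : ℝ) ^ (c * t) * V ^ q := by
  have e : (q + h) * (q / (q + h)) = q := by field_simp
  rw [Real.mul_rpow (by positivity) (by positivity), ← Real.rpow_mul two_pos.le,
    ← Real.rpow_mul two_pos.le, ← Real.rpow_mul hV, ← mul_assoc, ← Real.rpow_add two_pos, e]
  have h1 : a * t * (h / (q + h)) + b * t * (q / (q + h)) ≤ c * t := by
    calc _ = (a * (h / (q + h)) + b * (q / (q + h))) * t := by ring
      _ ≤ c * t := by gcongr
  gcongr
  exact one_le_two

/-- the local L^q norm estimate for few intervals (Lemma 2.18 (i)). -/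
theorem statement17 {ι : Type} [Fintype ι] [Nonempty ι]
    (A : ι → SL2) (hUH : UniformlyHyperbolic A)
    (K : Set RP1) (hK : IsAttractor A K)
    (p : ι → ℝ) (hp : ∀ i, 0 < p i) (hp1 : ∑ i : ι, p i = 1)
    (ν : Measure RP1) [IsProbabilityMeasure ν] (hν : IsStationary A p ν) (hνK : ν K = 1)
    (q αp : ℝ) (hq : 1 < q)
    (hαp : Filter.Tendsto (fun h : ℝ => (lqSpectrum ν (q + h) - lqSpectrum ν q) / h)
      (nhdsWithin 0 (Set.Ioi 0)) (nhds αp)) :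
    ∀ κ ∈ Set.Ioo (0:ℝ) 1, ∃ η : ℝ, 0 < η ∧ ∃ M : ℕ, ∀ m : ℕ, M ≤ m →
      ∀ s k : ℕ, k < 2 ^ s → ∀ D' : Finset ℕ,
        (∀ j ∈ D', j < 2 ^ (s + m) ∧ (dyadic (s + m) j ∩ dyadic s k).Nonempty) →
        (D'.card : ℝ) ≤ (2:ℝ) ^ ((αp * q - lqSpectrum ν q - κ) * m) →
        ∑ j ∈ D', (ν (dyadic (s + m) j)).toReal ^ q ≤
          (2:ℝ) ^ (-(lqSpectrum ν q + η) * m) * (ν (dyadic2 s k)).toReal ^ q := by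
  rintro κ ⟨hκ, -⟩
  by_cases hna : ∀ a > (0 : ℝ), ∃ n : ℕ, ∀ k < 2 ^ n, ν.real (dyadic n k) ≤ a
  · have hq0 : 0 < q := by linarith
    have hev := hαp.eventually (lt_mem_nhds (show αp - κ / (2 * q) < αp by
      have : 0 < κ / (2 * q) := by positivity
      linarith))
    obtain ⟨h, hh1, hh0⟩ := (hev.and self_mem_nhdsWithin).exists
    have hh : 0 < h := hh0
    generalize lqSpectrum ν q = τ at hh1 ⊢
    generalize hτ' : lqSpectrum ν (q + h) = τ' at hh1
    rw [lt_div_iff₀ hh] at hh1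
    set ε := κ * h / (8 * q) with hε
    have hε0 : 0 < ε := by positivity
    set η := κ * h / (4 * (q + h)) with hη
    have hη0 : 0 < η := by positivity
    obtain ⟨C₃, hC₃, hloc⟩ := local_bound hUH hp hp1 hν hna (show 1 < q + h by linarith)
    have hev1 := lqSum_le_of_lt ν (show 1 ≤ q + h by linarith) (show τ' - ε < _ by rw [hτ']; linarith)
    have hev2 : ∀ᶠ m : ℕ in atTop, Real.logb 2 C₃ ≤ ε * m :=
      (tendsto_natCast_atTop_atTop.const_mul_atTop hε0).eventually_ge_atTop _
    obtain ⟨M, hM⟩ := eventually_atTop.1 (hev1.and hev2)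
    refine ⟨η, hη0, M, fun m hm s k hk D' hD' hcard => ?_⟩
    obtain ⟨hL, hC⟩ := hM m hm
    rw [Real.logb_le_iff_le_rpow one_lt_two hC₃] at hC
    set V := ν.real (dyadic2 s k)
    have hV : 0 ≤ V := measureReal_nonneg
    have hqh : 0 < q + h := by linarith
    have hsum : ∑ j ∈ D', ν.real (dyadic (s + m) j) ^ (q + h)
        ≤ (2 : ℝ) ^ (-(τ' - 2 * ε) * m) * V ^ (q + h) := by
      calc _ ≤ C₃ * V ^ (q + h) * lqSum ν (q + h) m := hloc s m k hk D' hD'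
        _ ≤ (2 : ℝ) ^ (ε * m) * V ^ (q + h) * (2 : ℝ) ^ (-(τ' - ε) * m) := by
            have := lqSum_nonneg ν (q + h) m
            gcongr
        _ = _ := by
            rw [mul_right_comm, ← Real.rpow_add two_pos]; congr 2; ring
    have hnn : 0 ≤ ∑ j ∈ D', ν.real (dyadic (s + m) j) ^ (q + h) :=
      Finset.sum_nonneg fun _ _ => Real.rpow_nonneg measureReal_nonneg _
    have hexp := exponent_le hq0 hh hh1
    calc ∑ j ∈ D', (ν (dyadic (s + m) j)).toReal ^ q
        ≤ (D'.card : ℝ) ^ (h / (q + h)) *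
          (∑ j ∈ D', ν.real (dyadic (s + m) j) ^ (q + h)) ^ (q / (q + h)) :=
          sum_rpow_le_card D' (fun j => ν.real (dyadic (s + m) j)) (fun _ => measureReal_nonneg)
            hq0 hh
      _ ≤ ((2 : ℝ) ^ ((αp * q - τ - κ) * m)) ^ (h / (q + h)) *
          ((2 : ℝ) ^ (-(τ' - 2 * ε) * m) * V ^ (q + h)) ^ (q / (q + h)) :=
          mul_le_mul (Real.rpow_le_rpow (Nat.cast_nonneg _) hcard (by positivity))
            (Real.rpow_le_rpow hnn hsum (by positivity)) (Real.rpow_nonneg hnn _)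
            (Real.rpow_nonneg (Real.rpow_nonneg two_pos.le _) _)
      _ ≤ _ := two_rpow_combine hqh hV (Nat.cast_nonneg m) hexp
  · -- In the atomic case `τ` vanishes, so `α⁺ = 0` and `D'` has to be empty.
    push Not at hna
    obtain ⟨a, ha, hat⟩ := hna
    have hτ : ∀ t : ℝ, 1 ≤ t → lqSpectrum ν t = 0 := fun t ht => lqSpectrum_eq_zero ν ht ha hat
    have hα : αp = 0 := by
      refine tendsto_nhds_unique hαp (tendsto_const_nhds.congr' ?_)
      filter_upwards [self_mem_nhdsWithin] with h hh
      rw [hτ q hq.le, hτ (q + h) (by have : 0 < h := hh; linarith)]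
      simp
    refine ⟨1, one_pos, 1, fun m hm s k hk D' hD' hcard => ?_⟩
    have hm' : (1 : ℝ) ≤ m := by exact_mod_cast hm
    have hlt : (2 : ℝ) ^ ((αp * q - lqSpectrum ν q - κ) * m) < 1 := by
      refine Real.rpow_lt_one_of_one_lt_of_neg one_lt_two ?_
      rw [hα, hτ q hq.le]
      nlinarith
    have hc : D'.card = 0 := by
      have h1 := hcard.trans_lt hlt
      have h2 : D'.card < 1 := by exact_mod_cast h1
      omega
    rw [Finset.card_eq_zero.1 hc, Finset.sum_empty]
    positivity

end

end Paper
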